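/- arXiv:1901.06295 — 4 statements merged into one kernel-verified Lean document; each statement's English description precedes it below -/
import Mathlib

section
/- Let R be a monic polynomial in F_q[T] and A, B polynomials. Then the sum over primitive Dirichlet characters χ modulo R of χ(A)·conj(χ)(B) equals ∑_{EF=R, F | (A-B)} μ(E)φ(F) if gcd(AB, R) = 1, and equals 0 otherwise. -/
open Polynomial UniqueFactorizationMonoid
open scoped Classical

/-- The Möbius function on `F_q[T]`. -/
noncomputable def ffMu {Fq : Type*} [Field Fq] (E : Polynomial Fq) : ℤ :=
  if Squarefree E then (-1) ^ (normalizedFactors E).toFinset.card else 0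

/-- The Euler totient on `F_q[T]`. -/
noncomputable def ffPhi {Fq : Type*} [Field Fq] (R : Polynomial Fq) : ℕ :=
  if R.natDegree = 0 then 1
  else Nat.card {A : Polynomial Fq // A.degree < R.degree ∧ IsCoprime A R}

/-- A Dirichlet character on `F_q[T]` of modulus `R`. -/
structure FFChar (Fq : Type*) [Field Fq] (R : Polynomial Fq) where
  toFun : Polynomial Fq → ℂ
  map_mul' : ∀ A B, toFun (A * B) = toFun A * toFun B
  periodic' : ∀ A B, R ∣ (A - B) → toFun A = toFun B
  eq_zero_iff' : ∀ A, toFun A = 0 ↔ ¬ IsCoprime A R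

/-- `S` is an induced modulus of `χ`. -/
def FFChar.IsInducedBy {Fq : Type*} [Field Fq] {R : Polynomial Fq}
    (χ : FFChar Fq R) (S : Polynomial Fq) : Prop :=
  S.Monic ∧ S ∣ R ∧ ∃ χ₁ : FFChar Fq S, ∀ A, IsCoprime A R → χ.toFun A = χ₁.toFun A

/-- `χ` is primitive: it has no induced modulus of strictly smaller norm. -/
def FFChar.IsPrimitive {Fq : Type*} [Field Fq] {R : Polynomial Fq}
    (χ : FFChar Fq R) : Prop :=
  ∀ S : Polynomial Fq, χ.IsInducedBy S → R.natDegree ≤ S.natDegree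


namespace FFAux

variable {Fq : Type*} [Field Fq]

theorem FFChar_ext {R : Polynomial Fq} {χ ψ : FFChar Fq R} (h : ∀ A, χ.toFun A = ψ.toFun A) :
    χ = ψ := by
  cases χ; cases ψ
  congr
  funext A
  exact h A

theorem toFun_one {R : Polynomial Fq} (χ : FFChar Fq R) : χ.toFun 1 = 1 := by
  have h1 : χ.toFun 1 ≠ 0 := fun h => (χ.eq_zero_iff' 1).1 h isCoprime_one_left
  have h2 := χ.map_mul' 1 1
  rw [one_mul] at h2
  exact (mul_right_cancel₀ h1 (by rw [one_mul]; exact h2)).symm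

theorem isUnit_mk_iff (F A : Polynomial Fq) : IsUnit (AdjoinRoot.mk F A) ↔ IsCoprime A F := by
  constructor
  · rintro h
    obtain ⟨b, hb⟩ := h.exists_right_inv
    obtain ⟨B, rfl⟩ := AdjoinRoot.mk_surjective b
    rw [← map_mul, ← map_one (AdjoinRoot.mk F), AdjoinRoot.mk_eq_mk] at hb
    obtain ⟨c, hc⟩ := hb
    exact ⟨B, -c, by linear_combination hc⟩
  · rintro ⟨u, v, h⟩
    refine IsUnit.of_mul_eq_one (AdjoinRoot.mk F u) ?_
    rw [← map_mul, ← map_one (AdjoinRoot.mk F), AdjoinRoot.mk_eq_mk]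
    exact ⟨-v, by linear_combination h⟩

/-- A multiplicative character of the quotient gives a character. -/
noncomputable def ofMulChar (F : Polynomial Fq) (χ : MulChar (AdjoinRoot F) ℂ) : FFChar Fq F where
  toFun A := χ (AdjoinRoot.mk F A)
  map_mul' A B := by rw [map_mul, map_mul]
  periodic' A B h := by rw [AdjoinRoot.mk_eq_mk.2 h]
  eq_zero_iff' A := by
    rw [← isUnit_mk_iff]
    exact MulChar.apply_eq_zero_iff

theorem ofMulChar_bijective (F : Polynomial Fq) : Function.Bijective (ofMulChar F) := by
  constructor
  · intro χ ψ h
    apply MulChar.ext'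
    intro a
    obtain ⟨A, rfl⟩ := AdjoinRoot.mk_surjective a
    exact congrArg (fun c => FFChar.toFun c A) h
  · intro χ
    have key : ∀ A, χ.toFun (Function.surjInv (AdjoinRoot.mk_surjective (g := F))
        (AdjoinRoot.mk F A)) = χ.toFun A := fun A => by
      apply χ.periodic'
      rw [← AdjoinRoot.mk_eq_mk]
      exact Function.surjInv_eq (AdjoinRoot.mk_surjective (g := F)) _
    refine ⟨{ toFun := fun a => χ.toFun (Function.surjInv (AdjoinRoot.mk_surjective (g := F)) a)
              map_one' := ?_
              map_mul' := ?_
              map_nonunit' := ?_ }, ?_⟩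
    · rw [← map_one (AdjoinRoot.mk F), key, toFun_one]
    · intro a b
      obtain ⟨A, rfl⟩ := AdjoinRoot.mk_surjective a
      obtain ⟨B, rfl⟩ := AdjoinRoot.mk_surjective b
      rw [← map_mul, key, key, key, χ.map_mul']
    · intro a ha
      obtain ⟨A, rfl⟩ := AdjoinRoot.mk_surjective a
      change χ.toFun _ = 0
      rw [key, χ.eq_zero_iff', ← isUnit_mk_iff]
      exact ha
    · apply FFChar_ext
      intro A
      exact key A

theorem finite_adjoinRoot [Fintype Fq] {F : Polynomial Fq} (hF : F.Monic) :
    Finite (AdjoinRoot F) := by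
  have : Module.Finite Fq (AdjoinRoot F) := hF.finite_adjoinRoot
  exact Module.finite_of_finite Fq

theorem ffPhi_eq {F : Polynomial Fq} (hF : F.Monic) :
    ffPhi F = Nat.card (AdjoinRoot F)ˣ := by
  have main : Nat.card {A : Polynomial Fq // A.degree < F.degree ∧ IsCoprime A F}
      = Nat.card (AdjoinRoot F)ˣ := by
    refine Nat.card_congr (Equiv.ofBijective
      (fun A => ((isUnit_mk_iff F A.1).2 A.2.2).unit) ⟨?_, ?_⟩)
    · rintro ⟨A, hA, hA'⟩ ⟨B, hB, hB'⟩ h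
      have h' : AdjoinRoot.mk F A = AdjoinRoot.mk F B := congrArg Units.val h
      rw [AdjoinRoot.mk_eq_mk] at h'
      have := Polynomial.eq_zero_of_dvd_of_degree_lt h'
        (lt_of_le_of_lt (Polynomial.degree_sub_le _ _) (max_lt hA hB))
      exact Subtype.ext (sub_eq_zero.1 this)
    · intro u
      obtain ⟨A, hA⟩ := AdjoinRoot.mk_surjective (u : AdjoinRoot F)
      have h1 : AdjoinRoot.mk F (A %ₘ F) = u := by
        rw [← hA, AdjoinRoot.mk_eq_mk]
        exact ⟨-(A /ₘ F), by linear_combination Polynomial.modByMonic_add_div A F⟩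
      refine ⟨⟨A %ₘ F, Polynomial.degree_modByMonic_lt _ hF, ?_⟩, ?_⟩
      · rw [← isUnit_mk_iff, h1]
        exact u.isUnit
      · ext
        exact h1
  unfold ffPhi
  split_ifs with h
  · have : F = 1 := hF.natDegree_eq_zero.1 h
    subst this
    rw [← main]
    symm
    rw [Nat.card_eq_one_iff_unique]
    refine ⟨⟨?_⟩, ⟨⟨0, by simp, isCoprime_one_right⟩⟩⟩
    rintro ⟨A, hA, _⟩ ⟨B, hB, _⟩
    rw [Polynomial.degree_one, Nat.WithBot.lt_zero_iff, Polynomial.degree_eq_bot] at hA hB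
    exact Subtype.ext (hA.trans hB.symm)
  · exact main

theorem finite_FFChar [Fintype Fq] {F : Polynomial Fq} (hF : F.Monic) : Finite (FFChar Fq F) := by
  have := finite_adjoinRoot hF
  exact Finite.of_surjective _ (ofMulChar_bijective F).2

theorem sum_mulChar {M : Type*} [CommRing M] [Finite M] [Fintype (MulChar M ℂ)] (a b : M)
    (hb : IsUnit b) :
    ∑ χ : MulChar M ℂ, χ a * (starRingEnd ℂ) (χ b)
      = if a = b then (Nat.card Mˣ : ℂ) else 0 := by
  obtain ⟨b, rfl⟩ := hb
  have h0 : ∀ χ : MulChar M ℂ, χ a * (starRingEnd ℂ) (χ b) = χ (a * ↑b⁻¹) := by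
    intro χ
    have := MulChar.star_apply' χ (b : M)
    rw [RCLike.star_def] at this
    rw [this, MulChar.inv_apply, Ring.inverse_unit, map_mul]
  simp_rw [h0]
  split_ifs with h
  · subst h
    simp only [Units.mul_inv, map_one, Finset.sum_const, Finset.card_univ, nsmul_eq_mul, mul_one]
    rw [← MulChar.card_eq_card_units_of_hasEnoughRootsOfUnity M ℂ, Nat.card_eq_fintype_card]
  · have hne : a * ↑b⁻¹ ≠ 1 := fun h1 => h (Units.mul_inv_eq_one.1 h1)
    obtain ⟨χ, hχ⟩ := MulChar.exists_apply_ne_one_of_hasEnoughRootsOfUnity M ℂ hne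
    refine eq_zero_of_mul_eq_self_left hχ ?_
    simp only [Finset.mul_sum, ← MulChar.mul_apply]
    exact Fintype.sum_bijective _ (Group.mulLeft_bijective χ) _ _ fun χ' ↦ rfl

theorem sum_FFChar [Fintype Fq] {F : Polynomial Fq} (hF : F.Monic) [Fintype (FFChar Fq F)]
    (A B : Polynomial Fq) (hB : IsCoprime B F) :
    ∑ χ : FFChar Fq F, χ.toFun A * (starRingEnd ℂ) (χ.toFun B)
      = if F ∣ A - B then (ffPhi F : ℂ) else 0 := by
  have := finite_adjoinRoot hF
  have : Fintype (MulChar (AdjoinRoot F) ℂ) := Fintype.ofFinite _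
  rw [ffPhi_eq hF, ← Fintype.sum_bijective _ (ofMulChar_bijective F)
    (fun χ => χ (AdjoinRoot.mk F A) * (starRingEnd ℂ) (χ (AdjoinRoot.mk F B))) _ (fun χ => rfl),
    sum_mulChar _ _ ((isUnit_mk_iff F B).2 hB)]
  simp only [AdjoinRoot.mk_eq_mk]

/-- lifting of units -/
theorem exists_lift {F R A : Polynomial Fq} (hR : R ≠ 0) (hA : IsCoprime A F) :
    ∃ A', IsCoprime A' R ∧ F ∣ A' - A := by
  set t : Polynomial Fq := ∏ p ∈ (normalizedFactors R).toFinset with ¬ p ∣ A, p with ht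
  refine ⟨A + F * t, ?_, ⟨t, by ring⟩⟩
  refine isCoprime_of_prime_dvd (fun h => hR h.2) ?_
  intro P hP hPA hPR
  obtain ⟨q, hq, hPq⟩ := exists_mem_normalizedFactors_of_dvd hR hP.irreducible hPR
  have hqp : Prime q := prime_of_normalized_factor _ hq
  have hqA : q ∣ A + F * t := (hPq.dvd_iff_dvd_left).1 hPA
  by_cases h : q ∣ A
  · have h2 : q ∣ F * t := (dvd_add_right h).1 hqA
    rcases hqp.dvd_or_dvd h2 with h3 | h3
    · exact hqp.not_isUnit (hA.isUnit_of_dvd' h h3)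
    · rw [ht, hqp.dvd_finsetProd_iff] at h3
      obtain ⟨r, hr, hqr⟩ := h3
      rw [Finset.mem_filter, Multiset.mem_toFinset] at hr
      have hrp : Prime r := prime_of_normalized_factor _ hr.1
      exact hr.2 ((hqp.associated_of_dvd hrp hqr).symm.dvd.trans h)
  · have h2 : q ∣ t := Finset.dvd_prod_of_mem (fun x => x)
      (Finset.mem_filter.2 ⟨Multiset.mem_toFinset.2 hq, h⟩)
    exact h ((dvd_add_left (h2.mul_left F)).1 hqA)

theorem toFun_congr {F : Polynomial Fq} (χ : FFChar Fq F) {A B : Polynomial Fq}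
    (h : F ∣ A - B) : χ.toFun A = χ.toFun B := χ.periodic' A B h

theorem coprime_congr {F A B : Polynomial Fq} (h : F ∣ A - B) (hB : IsCoprime B F) :
    IsCoprime A F := by
  rw [← isUnit_mk_iff] at *
  rwa [AdjoinRoot.mk_eq_mk.2 h]

/-- kernel criterion -/
theorem inducedBy_of_ker {F R : Polynomial Fq} (hR : R ≠ 0) (hF : F.Monic) (hFR : F ∣ R)
    (χ : FFChar Fq R) (h : ∀ A, IsCoprime A R → F ∣ A - 1 → χ.toFun A = 1) :
    χ.IsInducedBy F := by
  -- well-definedness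
  have wd : ∀ A B, IsCoprime A R → IsCoprime B R → F ∣ A - B → χ.toFun A = χ.toFun B := by
    intro A B hA hB hAB
    obtain ⟨u, v, huv⟩ := id hB
    have huR : IsCoprime u R := ⟨B, v, by linear_combination huv⟩
    have h1 : χ.toFun (u * A) = 1 := by
      refine h _ (huR.mul_left hA) ?_
      obtain ⟨c, hc⟩ := hAB
      obtain ⟨d, hd⟩ := hFR
      exact ⟨u * c - v * d, by linear_combination huv + u * hc - v * hd⟩
    have h2 : χ.toFun (u * B) = 1 := by
      rw [← toFun_one χ]
      refine χ.periodic' _ _ ⟨-v, by linear_combination huv⟩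
    have h3 : χ.toFun u ≠ 0 := by
      rw [Ne, χ.eq_zero_iff', not_not]; exact huR
    rw [χ.map_mul'] at h1 h2
    exact mul_left_cancel₀ h3 (h1.trans h2.symm)
  choose L hL1 hL2 using fun (A : Polynomial Fq) (hA : IsCoprime A F) =>
    exists_lift (F := F) (R := R) hR hA
  refine ⟨hF, hFR, ⟨fun A => if hA : IsCoprime A F then χ.toFun (L A hA) else 0, ?_, ?_, ?_⟩, ?_⟩
  · intro A B
    by_cases hA : IsCoprime A F
    · by_cases hB : IsCoprime B F
      · have hAB := hA.mul_left hB
        rw [dif_pos hA, dif_pos hB, dif_pos hAB, ← χ.map_mul']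
        refine wd _ _ (hL1 _ _) ((hL1 _ _).mul_left (hL1 _ _)) ?_
        obtain ⟨a, ha⟩ := hL2 A hA
        obtain ⟨b, hb⟩ := hL2 B hB
        obtain ⟨c, hc⟩ := hL2 _ hAB
        exact ⟨c - L A hA * b - B * a, by linear_combination hc - L A hA * hb - B * ha⟩
      · rw [dif_neg hB, dif_neg (fun h => hB (IsCoprime.of_mul_left_right h)), mul_zero]
    · rw [dif_neg hA, dif_neg (fun h => hA (IsCoprime.of_mul_left_left h)), zero_mul]
  · intro A B hAB
    by_cases hB : IsCoprime B F
    · have hA := coprime_congr hAB hB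
      rw [dif_pos hA, dif_pos hB]
      refine wd _ _ (hL1 _ _) (hL1 _ _) ?_
      have := dvd_sub (dvd_add (hL2 A hA) hAB) (hL2 B hB)
      convert this using 1
      ring
    · have hA : ¬ IsCoprime A F := fun hA => hB (coprime_congr ((dvd_sub_comm).1 hAB) hA)
      rw [dif_neg hA, dif_neg hB]
  · intro A
    by_cases hA : IsCoprime A F
    · rw [dif_pos hA, χ.eq_zero_iff']
      simp [hA, hL1 A hA]
    · simp [hA]
  · intro A hA
    have hA' : IsCoprime A F := hA.of_isCoprime_of_dvd_right hFR
    simp only [dif_pos hA']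
    exact wd _ _ hA (hL1 _ _) ((dvd_sub_comm).1 (hL2 A hA'))

theorem inducedBy_mono {F G R : Polynomial Fq} (hR : R ≠ 0) (hG : G.Monic) (hGR : G ∣ R)
    (hFG : F ∣ G) {χ : FFChar Fq R} (h : χ.IsInducedBy F) : χ.IsInducedBy G := by
  obtain ⟨_, _, χ₁, h1⟩ := h
  refine inducedBy_of_ker hR hG hGR χ ?_
  intro A hA hGA
  rw [h1 A hA, χ₁.periodic' A 1 (hFG.trans hGA), toFun_one]

/-- `G` a common divisor of `F₁, F₂` which is a combination of them. -/
theorem inducedBy_gcd {F₁ F₂ G R : Polynomial Fq} (hR : R ≠ 0) (hG : G.Monic) (hGR : G ∣ R)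
    (hlin : ∃ u v, u * F₁ + v * F₂ = G)
    {χ : FFChar Fq R} (h₁ : χ.IsInducedBy F₁) (h₂ : χ.IsInducedBy F₂) : χ.IsInducedBy G := by
  obtain ⟨_, hF₁R, χ₁, h1⟩ := h₁
  obtain ⟨_, hF₂R, χ₂, h2⟩ := h₂
  obtain ⟨u, v, huv⟩ := hlin
  refine inducedBy_of_ker hR hG hGR χ ?_
  rintro A hA ⟨c, hc⟩
  set C := 1 + c * u * F₁ with hC
  have hCA : F₂ ∣ C - A := ⟨- (c * v), by linear_combination -hc + c * huv + hC⟩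
  have hC1 : F₁ ∣ C - 1 := ⟨c * u, by rw [hC]; ring⟩
  have hCF₁ : IsCoprime C F₁ := coprime_congr hC1 isCoprime_one_left
  have hCF₂ : IsCoprime C F₂ := coprime_congr hCA (hA.of_isCoprime_of_dvd_right hF₂R)
  obtain ⟨C', hC'R, hC'⟩ := exists_lift hR (hCF₁.mul_right hCF₂)
  have e1 : χ.toFun C' = 1 := by
    rw [h1 C' hC'R, ← toFun_one χ₁]
    apply χ₁.periodic'
    have := dvd_add ((dvd_mul_right F₁ F₂).trans hC') hC1
    simpa using this
  rw [h2 A hA, ← e1, h2 C' hC'R]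
  symm
  apply χ₂.periodic'
  have := dvd_add ((dvd_mul_left F₂ F₁).trans hC') hCA
  simpa using this

/-- The character mod `R` induced by a character mod `F`. -/
noncomputable def ind {F R : Polynomial Fq} (hFR : F ∣ R) (χ : FFChar Fq F) : FFChar Fq R where
  toFun A := if IsCoprime A R then χ.toFun A else 0
  map_mul' A B := by
    by_cases hA : IsCoprime A R <;> by_cases hB : IsCoprime B R <;>
      simp [IsCoprime.mul_left_iff, hA, hB, χ.map_mul']
  periodic' A B h := by
    have : IsCoprime A R ↔ IsCoprime B R :=
      ⟨coprime_congr (dvd_sub_comm.1 h), coprime_congr h⟩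
    rw [χ.periodic' A B (hFR.trans h)]
    simp [this]
  eq_zero_iff' A := by
    by_cases hA : IsCoprime A R
    · simp [hA, χ.eq_zero_iff', hA.of_isCoprime_of_dvd_right hFR]
    · simp [hA]

theorem ind_injective {F R : Polynomial Fq} (hR : R ≠ 0) (hFR : F ∣ R) :
    Function.Injective (ind hFR) := by
  intro χ ψ h
  apply FFChar_ext
  intro A
  by_cases hA : IsCoprime A F
  · obtain ⟨A', hA', hd⟩ := exists_lift (R := R) hR hA
    rw [← χ.periodic' _ _ hd, ← ψ.periodic' _ _ hd]
    have := congrArg (fun c => FFChar.toFun c A') h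
    simpa [ind, hA'] using this
  · rw [(χ.eq_zero_iff' A).2 hA, (ψ.eq_zero_iff' A).2 hA]

theorem sum_inducedBy [Fintype Fq] {F R : Polynomial Fq} (hR : R ≠ 0) (hF : F.Monic)
    (hFR : F ∣ R) [Fintype (FFChar Fq R)]
    (A B : Polynomial Fq) (hA : IsCoprime A R) (hB : IsCoprime B R) :
    ∑ χ : FFChar Fq R, (if χ.IsInducedBy F then χ.toFun A * (starRingEnd ℂ) (χ.toFun B) else 0)
      = if F ∣ A - B then (ffPhi F : ℂ) else 0 := by
  have := finite_FFChar hF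
  have : Fintype (FFChar Fq F) := Fintype.ofFinite _
  rw [← sum_FFChar hF A B (hB.of_isCoprime_of_dvd_right hFR), ← Finset.sum_filter]
  symm
  refine Finset.sum_bij (fun χ _ => ind hFR χ) ?_ ?_ ?_ ?_
  · intro χ _
    rw [Finset.mem_filter]
    refine ⟨Finset.mem_univ _, hF, hFR, χ, fun C hC => ?_⟩
    simp [ind, hC]
  · intro χ _ ψ _ h
    exact ind_injective hR hFR h
  · intro χ hχ
    rw [Finset.mem_filter] at hχ
    obtain ⟨_, _, _, χ₁, h1⟩ := hχ
    refine ⟨χ₁, Finset.mem_univ _, FFChar_ext fun C => ?_⟩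
    by_cases hC : IsCoprime C R
    · simp [ind, hC, h1 C hC]
    · rw [(χ.eq_zero_iff' C).2 hC]
      simp [ind, hC]
  · intro χ _
    simp [ind, hA, hB]

theorem mul_div_eq {E R : Polynomial Fq} (hE : E.Monic) (h : E ∣ R) : E * (R / E) = R :=
  EuclideanDomain.mul_div_cancel' hE.ne_zero h

theorem div_monic {E R : Polynomial Fq} (hR : R.Monic) (hE : E.Monic) (h : E ∣ R) :
    (R / E).Monic := by
  refine hE.of_mul_monic_left ?_
  rw [mul_div_eq hE h]
  exact hR

theorem div_dvd {E R : Polynomial Fq} (hE : E.Monic) (h : E ∣ R) : (R / E) ∣ R :=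
  ⟨E, by rw [mul_comm, mul_div_eq hE h]⟩

theorem div_dvd_div {D E R : Polynomial Fq} (hD : D.Monic) (hE : E.Monic) (h : E ∣ R)
    (hDE : D ∣ E) : (R / E) ∣ (R / D) := by
  obtain ⟨c, hc⟩ := hDE
  refine ⟨c, mul_left_cancel₀ hD.ne_zero ?_⟩
  rw [mul_div_eq hD ((Dvd.intro c hc.symm).trans h)]
  have := mul_div_eq hE h
  linear_combination -this + (R / E) * hc

theorem monic_of_mem {R p : Polynomial Fq} (hp : p ∈ normalizedFactors R) : p.Monic := by
  have h1 := normalize_normalized_factor p hp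
  rw [← h1]
  exact Polynomial.monic_normalize (ne_zero_of_mem_normalizedFactors hp)

theorem nf_prod {R : Polynomial Fq} {s : Finset (Polynomial Fq)}
    (hs : s ⊆ (normalizedFactors R).toFinset) :
    normalizedFactors (∏ p ∈ s, p) = s.val := by
  have h1 := normalizedFactors_prod_eq s.val (fun a ha =>
    irreducible_of_normalized_factor a (Multiset.mem_toFinset.1 (hs ha)))
  rw [Finset.prod_eq_multiset_prod, Multiset.map_id', h1]
  conv_rhs => rw [← Multiset.map_id' s.val]
  refine Multiset.map_congr rfl fun a ha => ?_
  exact normalize_normalized_factor a (Multiset.mem_toFinset.1 (hs ha))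

theorem prod_monic {R : Polynomial Fq} {s : Finset (Polynomial Fq)}
    (hs : s ⊆ (normalizedFactors R).toFinset) : (∏ p ∈ s, p).Monic :=
  Polynomial.monic_prod_of_monic _ _ fun p hp => monic_of_mem (Multiset.mem_toFinset.1 (hs hp))

theorem prod_dvd {R : Polynomial Fq} (hR : R ≠ 0) {s : Finset (Polynomial Fq)}
    (hs : s ⊆ (normalizedFactors R).toFinset) : (∏ p ∈ s, p) ∣ R := by
  rw [dvd_iff_normalizedFactors_le_normalizedFactors (prod_monic hs).ne_zero hR, nf_prod hs,
    Multiset.le_iff_subset s.nodup]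
  intro a ha
  exact Multiset.mem_toFinset.1 (hs ha)

theorem mu_prod {R : Polynomial Fq} {s : Finset (Polynomial Fq)}
    (hs : s ⊆ (normalizedFactors R).toFinset) : ffMu (∏ p ∈ s, p) = (-1) ^ s.card := by
  have hsq : Squarefree (∏ p ∈ s, p) := by
    rw [squarefree_iff_nodup_normalizedFactors (prod_monic hs).ne_zero, nf_prod hs]
    exact s.nodup
  unfold ffMu
  rw [if_pos hsq, nf_prod hs, Finset.val_toFinset]

theorem exists_of_squarefree {R E : Polynomial Fq} (hR : R ≠ 0) (hE : E.Monic) (hER : E ∣ R)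
    (hsq : Squarefree E) : ∃ s ⊆ (normalizedFactors R).toFinset, ∏ p ∈ s, p = E := by
  have hnd := (squarefree_iff_nodup_normalizedFactors hE.ne_zero).1 hsq
  refine ⟨(normalizedFactors E).toFinset, ?_, ?_⟩
  · intro p hp
    rw [Multiset.mem_toFinset] at hp ⊢
    exact Multiset.mem_of_le
      ((dvd_iff_normalizedFactors_le_normalizedFactors hE.ne_zero hR).1 hER) hp
  · rw [Finset.prod_eq_multiset_prod, Multiset.map_id', Multiset.toFinset_val, hnd.dedup,
      prod_normalizedFactors_eq, hE.normalize_eq_self]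
    exact hE.ne_zero

theorem inducedBy_self {R : Polynomial Fq} (hR : R.Monic) (χ : FFChar Fq R) : χ.IsInducedBy R :=
  ⟨hR, dvd_rfl, χ, fun _ _ => rfl⟩

theorem inducedBy_prod_iff {R : Polynomial Fq} (hR : R.Monic) (χ : FFChar Fq R)
    {s : Finset (Polynomial Fq)} (hs : s ⊆ (normalizedFactors R).toFinset) :
    χ.IsInducedBy (R / ∏ p ∈ s, p) ↔ ∀ p ∈ s, χ.IsInducedBy (R / p) := by
  constructor
  · intro h p hp
    have hp' := Multiset.mem_toFinset.1 (hs hp)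
    have hpm := monic_of_mem hp'
    have hpR := dvd_of_mem_normalizedFactors hp'
    exact inducedBy_mono hR.ne_zero (div_monic hR hpm hpR) (div_dvd hpm hpR)
      (div_dvd_div hpm (prod_monic hs) (prod_dvd hR.ne_zero hs)
        (Finset.dvd_prod_of_mem (fun x => x) hp)) h
  · induction s using Finset.induction_on with
    | empty =>
      intro _
      rw [Finset.prod_empty, EuclideanDomain.div_one]
      exact inducedBy_self hR χ
    | insert p s hps ih =>
      intro h
      have hs' : s ⊆ (normalizedFactors R).toFinset := (Finset.subset_insert p s).trans hs
      have h1 := ih hs' (fun q hq => h q (Finset.mem_insert_of_mem hq))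
      have h2 := h p (Finset.mem_insert_self p s)
      have hp' := Multiset.mem_toFinset.1 (hs (Finset.mem_insert_self p s))
      have hpm := monic_of_mem hp'
      have hpp := prime_of_normalized_factor p hp'
      have hpR := dvd_of_mem_normalizedFactors hp'
      have hm := prod_monic hs
      have hd := prod_dvd hR.ne_zero hs
      refine inducedBy_gcd hR.ne_zero (div_monic hR hm hd) (div_dvd hm hd) ?_ h2 h1
      have hcop : IsCoprime p (∏ q ∈ s, q) := by
        rw [hpp.irreducible.coprime_iff_not_dvd, hpp.dvd_finsetProd_iff]
        rintro ⟨q, hq, hpq⟩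
        have hq' := Multiset.mem_toFinset.1 (hs' hq)
        have hqp := prime_of_normalized_factor q hq'
        have : p = q := Polynomial.eq_of_monic_of_associated hpm (monic_of_mem hq')
          (hpp.associated_of_dvd hqp hpq)
        exact hps (this ▸ hq)
      obtain ⟨u, v, huv⟩ := hcop
      have e0 := mul_div_eq hm hd
      have e1 := mul_div_eq hpm hpR
      have e2 := mul_div_eq (prod_monic hs') (prod_dvd hR.ne_zero hs')
      set G := R / ∏ q ∈ insert p s, q with hG
      rw [Finset.prod_insert hps] at e0
      have f1 : R / p = (∏ q ∈ s, q) * G :=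
        mul_left_cancel₀ hpm.ne_zero (by linear_combination e1 - e0)
      have f2 : R / (∏ q ∈ s, q) = p * G :=
        mul_left_cancel₀ (prod_monic hs').ne_zero (by linear_combination e2 - e0)
      exact ⟨v, u, by rw [f1, f2]; linear_combination G * huv⟩

theorem isPrimitive_iff {R : Polynomial Fq} (hR : R.Monic) (χ : FFChar Fq R) :
    χ.IsPrimitive ↔ ∀ p ∈ (normalizedFactors R).toFinset, ¬ χ.IsInducedBy (R / p) := by
  constructor
  · intro h p hp hi
    have hp' := Multiset.mem_toFinset.1 hp
    have hpm := monic_of_mem hp'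
    have hpR := dvd_of_mem_normalizedFactors hp'
    have h1 := h _ hi
    have h2 := congrArg Polynomial.natDegree (mul_div_eq hpm hpR)
    rw [hpm.natDegree_mul (div_monic hR hpm hpR)] at h2
    have h3 := (irreducible_of_normalized_factor p hp').natDegree_pos
    omega
  · intro h S hS
    by_contra hlt
    obtain ⟨hSm, ⟨K, hK⟩, _⟩ := id hS
    have hKm : K.Monic := hSm.of_mul_monic_left (hK ▸ hR)
    have hKu : ¬ IsUnit K := by
      intro hu
      rw [hKm.isUnit_iff] at hu
      apply hlt
      rw [hK, hu, mul_one]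
    obtain ⟨q, hq⟩ := exists_mem_normalizedFactors hKm.ne_zero hKu
    have hqK := dvd_of_mem_normalizedFactors hq
    have hKR : K ∣ R := Dvd.intro_left S hK.symm
    have hqR : q ∈ normalizedFactors R := Multiset.mem_of_le
      ((dvd_iff_normalizedFactors_le_normalizedFactors hKm.ne_zero hR.ne_zero).1 hKR) hq
    have hqm := monic_of_mem hqR
    refine h q (Multiset.mem_toFinset.2 hqR) (inducedBy_mono hR.ne_zero
      (div_monic hR hqm (hqK.trans hKR)) (div_dvd hqm (hqK.trans hKR)) ?_ hS)
    obtain ⟨c, hc⟩ := hqK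
    refine ⟨c, mul_left_cancel₀ hqm.ne_zero ?_⟩
    rw [mul_div_eq hqm (hqR |> dvd_of_mem_normalizedFactors), hK, hc]
    ring

theorem sum_indicator {R : Polynomial Fq} (hR : R.Monic) (χ : FFChar Fq R) :
    ∑ s ∈ (normalizedFactors R).toFinset.powerset,
      (if χ.IsInducedBy (R / ∏ p ∈ s, p) then (-1 : ℂ) ^ s.card else 0)
      = if χ.IsPrimitive then 1 else 0 := by
  set T := (normalizedFactors R).toFinset.filter (fun p => χ.IsInducedBy (R / p)) with hT
  have h1 : (normalizedFactors R).toFinset.powerset.filter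
      (fun s => χ.IsInducedBy (R / ∏ p ∈ s, p)) = T.powerset := by
    ext s
    rw [Finset.mem_filter, Finset.mem_powerset, Finset.mem_powerset]
    constructor
    · rintro ⟨hs, h⟩ p hp
      exact Finset.mem_filter.2 ⟨hs hp, (inducedBy_prod_iff hR χ hs).1 h p hp⟩
    · intro h
      have hs : s ⊆ (normalizedFactors R).toFinset := h.trans (Finset.filter_subset _ _)
      exact ⟨hs, (inducedBy_prod_iff hR χ hs).2 fun p hp => (Finset.mem_filter.1 (h hp)).2⟩
  rw [← Finset.sum_filter, h1]
  have h2 := congrArg (Int.cast : ℤ → ℂ) (Finset.sum_powerset_neg_one_pow_card (x := T))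
  push_cast at h2
  rw [h2]
  congr 1
  rw [isPrimitive_iff hR, hT, Finset.filter_eq_empty_iff]

theorem rhs_eq {R : Polynomial Fq} (hR : R.Monic) (D : Polynomial Fq) :
    ∑ᶠ (E : Polynomial Fq) (_ : E.Monic ∧ E ∣ R ∧ (R / E) ∣ D), (ffMu E : ℂ) * (ffPhi (R / E) : ℂ)
      = ∑ s ∈ (normalizedFactors R).toFinset.powerset,
        (-1 : ℂ) ^ s.card * (if (R / ∏ p ∈ s, p) ∣ D then (ffPhi (R / ∏ p ∈ s, p) : ℂ) else 0) := by
  have hinj : Set.InjOn (fun s : Finset (Polynomial Fq) => ∏ p ∈ s, p)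
      (normalizedFactors R).toFinset.powerset := by
    intro s hs t ht h
    rw [Finset.mem_coe, Finset.mem_powerset] at hs ht
    have h' : ∏ p ∈ s, p = ∏ p ∈ t, p := h
    apply Finset.val_injective
    rw [← nf_prod hs, ← nf_prod ht, h']
  rw [finsum_eq_sum_of_support_subset (s := (normalizedFactors R).toFinset.powerset.image
    (fun s : Finset (Polynomial Fq) => ∏ p ∈ s, p)), Finset.sum_image hinj]
  · refine Finset.sum_congr rfl fun s hs => ?_
    rw [Finset.mem_powerset] at hs
    rw [finsum_eq_if, mu_prod hs]
    have := prod_monic hs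
    have := prod_dvd hR.ne_zero hs
    simp_all
  · intro E hE
    rw [Function.mem_support, finsum_eq_if] at hE
    split_ifs at hE with hc
    · have hmu : ffMu E ≠ 0 := by
        intro h0
        apply hE
        rw [h0]; simp
      have hsq : Squarefree E := by
        by_contra hn
        exact hmu (if_neg hn)
      obtain ⟨s, hs, rfl⟩ := exists_of_squarefree hR.ne_zero hc.1 hc.2.1 hsq
      simp only [Finset.coe_image]
      exact ⟨s, Finset.mem_coe.2 (Finset.mem_powerset.2 hs), rfl⟩
    · exact absurd rfl hE

end FFAux

/-- `∑*_{χ mod R} χ(A)·conj χ(B) = ∑_{EF=R, F ∣ A-B} μ(E)φ(F)` when `(AB,R)=1`, else `0`. -/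
theorem sum_primitive_chars_mul_conj {Fq : Type*} [Field Fq] [Fintype Fq]
    (R : Polynomial Fq) (hR : R.Monic) (A B : Polynomial Fq) :
    ∑ᶠ (χ : FFChar Fq R) (_ : χ.IsPrimitive), χ.toFun A * (starRingEnd ℂ) (χ.toFun B)
      = if IsCoprime (A * B) R then
          ∑ᶠ (E : Polynomial Fq) (_ : E.Monic ∧ E ∣ R ∧ (R / E) ∣ (A - B)),
            (ffMu E : ℂ) * (ffPhi (R / E) : ℂ)
        else 0 := by
  have := FFAux.finite_FFChar hR
  have : Fintype (FFChar Fq R) := Fintype.ofFinite _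
  rw [finsum_eq_sum_of_fintype]
  split_ifs with hAB
  · have hA : IsCoprime A R := IsCoprime.of_mul_left_left hAB
    have hB : IsCoprime B R := IsCoprime.of_mul_left_right hAB
    rw [FFAux.rhs_eq hR]
    simp_rw [finsum_eq_if]
    have h1 : ∀ χ : FFChar Fq R,
        (if χ.IsPrimitive then χ.toFun A * (starRingEnd ℂ) (χ.toFun B) else 0)
        = ∑ s ∈ (normalizedFactors R).toFinset.powerset, (-1 : ℂ) ^ s.card *
          (if χ.IsInducedBy (R / ∏ p ∈ s, p) then χ.toFun A * (starRingEnd ℂ) (χ.toFun B)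
            else 0) := by
      intro χ
      have h2 := FFAux.sum_indicator hR χ
      calc _ = (if χ.IsPrimitive then (1 : ℂ) else 0) *
            (χ.toFun A * (starRingEnd ℂ) (χ.toFun B)) := by split_ifs <;> simp
        _ = _ := by
          rw [← h2, Finset.sum_mul]
          refine Finset.sum_congr rfl fun s _ => ?_
          split_ifs <;> simp
    rw [Finset.sum_congr rfl fun χ _ => h1 χ, Finset.sum_comm]
    refine Finset.sum_congr rfl fun s hs => ?_
    rw [Finset.mem_powerset] at hs
    rw [← Finset.mul_sum, FFAux.sum_inducedBy hR.ne_zero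
      (FFAux.div_monic hR (FFAux.prod_monic hs) (FFAux.prod_dvd hR.ne_zero hs))
      (FFAux.div_dvd (FFAux.prod_monic hs) (FFAux.prod_dvd hR.ne_zero hs)) A B hA hB]
  · simp_rw [finsum_eq_if]
    refine Finset.sum_eq_zero fun χ _ => ?_
    have h0 := (χ.eq_zero_iff' (A * B)).2 hAB
    rw [χ.map_mul', mul_eq_zero] at h0
    rcases h0 with h0 | h0 <;> simp [h0]
end

section
/- For all positive integers x and any q ≥ 2, ∑_{N monic in F_q[T], deg N ≤ x} 2^{ω(N)}/|N| = ((q-1)/(2q))·x² + ((3q+1)/(2q))·x + 1. -/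
open Polynomial UniqueFactorizationMonoid
open scoped Classical

/-- `ω(N)`: the number of distinct monic prime divisors of `N` in `F_q[T]`. -/
noncomputable def ffOmega {Fq : Type*} [Field Fq] (N : Polynomial Fq) : ℕ :=
  (normalizedFactors N).toFinset.card

namespace FFAux

set_option linter.unusedSectionVars false

variable {Fq : Type*} [Field Fq] [Fintype Fq]

lemma finite_monic (n : ℕ) : {N : Fq[X] | N.Monic ∧ N.natDegree = n}.Finite := by
  have : Finite {p : Fq[X] // p.Monic ∧ p.natDegree = n} :=
    Finite.of_equiv _ ((monicEquivDegreeLT (R := Fq) n).trans (degreeLTEquiv Fq n).toEquiv).symm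
  exact Set.finite_coe_iff.1 this

/-- Monic polynomials of degree `n`. -/
noncomputable def Mon (Fq : Type*) [Field Fq] [Fintype Fq] (n : ℕ) : Finset Fq[X] :=
  (finite_monic (Fq := Fq) n).toFinset

lemma mem_Mon {n : ℕ} {N : Fq[X]} : N ∈ Mon Fq n ↔ N.Monic ∧ N.natDegree = n := by
  simp [Mon]

lemma card_Mon (n : ℕ) : (Mon Fq n).card = Fintype.card Fq ^ n := by
  have h : Nat.card {p : Fq[X] // p.Monic ∧ p.natDegree = n} = Fintype.card Fq ^ n := by
    rw [Nat.card_congr ((monicEquivDegreeLT (R := Fq) n).trans (degreeLTEquiv Fq n).toEquiv)]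
    simp
  rw [← h, Mon, ← Set.ncard_eq_toFinset_card _ (finite_monic n)]
  rfl

/-- Pairs of monic polynomials of total degree `n`. -/
noncomputable def Tp (Fq : Type*) [Field Fq] [Fintype Fq] (n : ℕ) : Finset (Fq[X] × Fq[X]) :=
  (Finset.HasAntidiagonal.antidiagonal n).biUnion fun p => Mon Fq p.1 ×ˢ Mon Fq p.2

lemma mem_T {n : ℕ} {p : Fq[X] × Fq[X]} :
    p ∈ Tp Fq n ↔ p.1.Monic ∧ p.2.Monic ∧ p.1.natDegree + p.2.natDegree = n := by
  simp only [Tp, Finset.mem_biUnion, Finset.HasAntidiagonal.mem_antidiagonal, Finset.mem_product, mem_Mon]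
  constructor
  · rintro ⟨⟨i, j⟩, h, ⟨h1, h2⟩, h3, h4⟩
    simp only at h h2 h4
    exact ⟨h1, h3, by omega⟩
  · rintro ⟨h1, h2, h3⟩
    exact ⟨(_, _), h3, ⟨h1, rfl⟩, h2, rfl⟩

lemma card_T (n : ℕ) : (Tp Fq n).card = (n + 1) * Fintype.card Fq ^ n := by
  rw [Tp, Finset.card_biUnion]
  · rw [Finset.sum_congr rfl (g := fun _ => Fintype.card Fq ^ n)]
    · simp
    · intro p hp
      rw [Finset.card_product, card_Mon, card_Mon, ← pow_add, Finset.HasAntidiagonal.mem_antidiagonal.1 hp]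
  · rintro ⟨i, j⟩ _ ⟨i', j'⟩ _ hne
    rw [Function.onFun, Finset.disjoint_left]
    rintro ⟨a, b⟩ h1 h2
    simp only [Finset.mem_product, mem_Mon] at h1 h2
    apply hne
    rw [← h1.1.2, ← h1.2.2, ← h2.1.2, ← h2.2.2]

/-- Coprime pairs. -/
noncomputable def Cop (Fq : Type*) [Field Fq] [Fintype Fq] (n : ℕ) : Finset (Fq[X] × Fq[X]) :=
  (Tp Fq n).filter fun p => IsCoprime p.1 p.2

lemma mem_C {n : ℕ} {p : Fq[X] × Fq[X]} : p ∈ Cop Fq n ↔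
    (p.1.Monic ∧ p.2.Monic ∧ p.1.natDegree + p.2.natDegree = n) ∧ IsCoprime p.1 p.2 := by
  simp [Cop, mem_T]

lemma dvd_aux {D D' a b a' b' : Fq[X]} (h : IsCoprime a b) (h1 : D * a = D' * a')
    (h2 : D * b = D' * b') : D' ∣ D := by
  obtain ⟨u, v, huv⟩ := h
  refine ⟨u * a' + v * b', ?_⟩
  linear_combination (-D) * huv + u * h1 + v * h2

lemma exists_aux {A B : Fq[X]} (hA : A.Monic) (hB : B.Monic) : ∃ D a b : Fq[X],
    D.Monic ∧ a.Monic ∧ b.Monic ∧ IsCoprime a b ∧ D * a = A ∧ D * b = B := by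
  have hg0 : EuclideanDomain.gcd A B ≠ 0 := by
    intro h
    exact hA.ne_zero (EuclideanDomain.gcd_eq_zero_iff.1 h).1
  set D := normalize (EuclideanDomain.gcd A B) with hD
  have hDm : D.Monic := monic_normalize hg0
  obtain ⟨a, ha⟩ : D ∣ A := normalize_dvd_iff.2 (EuclideanDomain.gcd_dvd_left A B)
  obtain ⟨b, hb⟩ : D ∣ B := normalize_dvd_iff.2 (EuclideanDomain.gcd_dvd_right A B)
  refine ⟨D, a, b, hDm, hDm.of_mul_monic_left (ha ▸ hA), hDm.of_mul_monic_left (hb ▸ hB), ?_,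
    ha.symm, hb.symm⟩
  obtain ⟨w, hw⟩ : EuclideanDomain.gcd A B ∣ D := dvd_normalize_iff.2 dvd_rfl
  rw [EuclideanDomain.gcd_eq_gcd_ab] at hw
  refine ⟨EuclideanDomain.gcdA A B * w, EuclideanDomain.gcdB A B * w, ?_⟩
  apply mul_left_cancel₀ hDm.ne_zero
  generalize EuclideanDomain.gcdA A B = u at *
  generalize EuclideanDomain.gcdB A B = v at *
  linear_combination (-w*u) * ha - w*v*hb - hw

lemma card_T_eq (n : ℕ) : (Tp Fq n).card =
    ∑ k ∈ Finset.range (n / 2 + 1), Fintype.card Fq ^ k * (Cop Fq (n - 2 * k)).card := by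
  have : ∑ k ∈ Finset.range (n / 2 + 1), Fintype.card Fq ^ k * (Cop Fq (n - 2 * k)).card =
      ((Finset.range (n / 2 + 1)).sigma fun k => Mon Fq k ×ˢ Cop Fq (n - 2 * k)).card := by
    rw [Finset.card_sigma]
    simp [card_Mon]
  rw [this]
  symm
  apply Finset.card_nbij (fun s => (s.2.1 * s.2.2.1, s.2.1 * s.2.2.2))
  · rintro ⟨k, D, a, b⟩ h
    simp only [Finset.coe_sigma, Set.mem_sigma_iff, Finset.mem_coe, Finset.mem_product, mem_Mon,
      mem_C, Finset.mem_range] at h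
    obtain ⟨hk, ⟨hD, hDk⟩, ⟨ha, hb, hab⟩, hc⟩ := h
    simp only [Finset.mem_coe, mem_T]
    refine ⟨hD.mul ha, hD.mul hb, ?_⟩
    rw [hD.natDegree_mul ha, hD.natDegree_mul hb]
    omega
  · rintro ⟨k, D, a, b⟩ h ⟨k', D', a', b'⟩ h' heq
    simp only [Finset.coe_sigma, Set.mem_sigma_iff, Finset.mem_coe, Finset.mem_product, mem_Mon,
      mem_C, Finset.mem_range] at h h'
    obtain ⟨hk, ⟨hD, hDk⟩, ⟨ha, hb, hab⟩, hc⟩ := h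
    obtain ⟨hk', ⟨hD', hDk'⟩, ⟨ha', hb', hab'⟩, hc'⟩ := h'
    simp only [Prod.mk.injEq] at heq
    have hDD : D = D' := eq_of_monic_of_associated hD hD' (associated_of_dvd_dvd
      (dvd_aux hc' heq.1.symm heq.2.symm) (dvd_aux hc heq.1 heq.2))
    subst hDD
    have e1 := mul_left_cancel₀ hD.ne_zero heq.1
    have e2 := mul_left_cancel₀ hD.ne_zero heq.2
    subst e1 e2 hDk hDk'
    rfl
  · rintro ⟨A, B⟩ h
    simp only [Finset.mem_coe, mem_T] at h
    obtain ⟨hA, hB, hn⟩ := h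
    obtain ⟨D, a, b, hD, ha, hb, hc, rfl, rfl⟩ := exists_aux hA hB
    rw [hD.natDegree_mul ha, hD.natDegree_mul hb] at hn
    refine ⟨⟨D.natDegree, D, a, b⟩, ?_, rfl⟩
    simp only [Finset.coe_sigma, Set.mem_sigma_iff, Finset.mem_coe, Finset.mem_product, mem_Mon,
      mem_C, Finset.mem_range]
    refine ⟨by omega, ⟨hD, trivial⟩, ⟨ha, hb, by omega⟩, hc⟩

lemma card_C_rec (n : ℕ) :
    (Tp Fq (n + 2)).card = (Cop Fq (n + 2)).card + Fintype.card Fq * (Tp Fq n).card := by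
  rw [card_T_eq (n + 2), card_T_eq n, show (n + 2) / 2 + 1 = (n / 2 + 1) + 1 by omega,
    Finset.sum_range_succ', Finset.mul_sum, add_comm]
  congr 1
  · simp
  · apply Finset.sum_congr rfl
    intro k _
    rw [show n + 2 - 2 * (k + 1) = n - 2 * k by omega]
    ring

lemma prod_nf {N : Fq[X]} (hN : N.Monic) : (normalizedFactors N).prod = N := by
  rw [prod_normalizedFactors_eq hN.ne_zero, hN.normalize_eq_self]

lemma nf_monic {N p : Fq[X]} (h : p ∈ normalizedFactors N) : p.Monic := by
  rw [← normalize_normalized_factor p h]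
  exact monic_normalize (ne_zero_of_mem_normalizedFactors h)

lemma nf_sub {N : Fq[X]} {s : Multiset Fq[X]} (hs : ∀ p ∈ s, p ∈ normalizedFactors N) :
    s.prod.Monic ∧ normalizedFactors s.prod = s := by
  constructor
  · have := monic_multiset_prod_of_monic s id (fun p hp => nf_monic (hs p hp))
    simpa using this
  · have h := normalizedFactors_multiset_prod s
      (fun h0 => zero_notMem_normalizedFactors N (hs 0 h0))
    have h2 : s.map normalizedFactors = s.map fun p => {p} := by
      apply Multiset.map_congr rfl
      intro p hp
      rw [normalizedFactors_irreducible (irreducible_of_normalized_factor p (hs p hp)),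
        normalize_normalized_factor p (hs p hp)]
    rw [h, h2, Multiset.sum_map_singleton]

lemma card_fiber {n : ℕ} {N : Fq[X]} (hN : N ∈ Mon Fq n) :
    ((Cop Fq n).filter fun p => p.1 * p.2 = N).card = 2 ^ ffOmega N := by
  rw [mem_Mon] at hN
  obtain ⟨hN, hn⟩ := hN
  rw [ffOmega, ← Finset.card_powerset]
  have key : ∀ {a b : Fq[X]}, a.Monic → b.Monic → IsCoprime a b → a * b = N →
      (normalizedFactors N).filter (· ∈ normalizedFactors a) = normalizedFactors a := by
    intro a b ha hb hc hab
    have hd := disjoint_normalizedFactors hc.isRelPrime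
    rw [← hab, normalizedFactors_mul ha.ne_zero hb.ne_zero, Multiset.filter_add,
      Multiset.filter_eq_self.2 (fun _ h => h), Multiset.filter_eq_nil.2, add_zero]
    intro p hp hp'
    exact Multiset.disjoint_left.1 hd hp' hp
  apply Finset.card_nbij (fun p => (normalizedFactors p.1).toFinset)
  · rintro ⟨a, b⟩ h
    simp only [Finset.coe_filter, Set.mem_ofPred_eq, mem_C] at h
    obtain ⟨⟨⟨ha, hb, hab⟩, hc⟩, he⟩ := h
    simp only [Finset.mem_coe, Finset.mem_powerset]
    rw [← he, normalizedFactors_mul ha.ne_zero hb.ne_zero]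
    intro p hp
    simp only [Multiset.mem_toFinset, Multiset.mem_add] at hp ⊢
    exact Or.inl hp
  · rintro ⟨a, b⟩ h ⟨a', b'⟩ h' heq
    simp only [Finset.coe_filter, Set.mem_ofPred_eq, mem_C] at h h'
    obtain ⟨⟨⟨ha, hb, hab⟩, hc⟩, he⟩ := h
    obtain ⟨⟨⟨ha', hb', hab'⟩, hc'⟩, he'⟩ := h'
    simp only at heq
    have hm : ∀ p, p ∈ normalizedFactors a ↔ p ∈ normalizedFactors a' := by
      intro p
      rw [← Multiset.mem_toFinset, heq, Multiset.mem_toFinset]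
    have haa : a = a' := by
      rw [← prod_nf ha, ← prod_nf ha', ← key ha hb hc he, ← key ha' hb' hc' he']
      simp only [hm]
    subst haa
    have hbb := mul_left_cancel₀ ha.ne_zero (he.trans he'.symm)
    rw [hbb]
  · intro S hS
    simp only [Finset.mem_coe, Finset.mem_powerset] at hS
    set s := (normalizedFactors N).filter (· ∈ S) with hs
    set t := (normalizedFactors N).filter (¬ · ∈ S) with ht
    obtain ⟨hs1, hs2⟩ := nf_sub (N := N) (s := s) (fun p hp => Multiset.mem_of_mem_filter hp)
    obtain ⟨ht1, ht2⟩ := nf_sub (N := N) (s := t) (fun p hp => Multiset.mem_of_mem_filter hp)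
    have hst : s.prod * t.prod = N := by
      rw [← Multiset.prod_add, hs, ht, Multiset.filter_add_not, prod_nf hN]
    refine ⟨(s.prod, t.prod), ?_, ?_⟩
    · simp only [Finset.coe_filter, Set.mem_ofPred_eq, mem_C]
      refine ⟨⟨⟨hs1, ht1, ?_⟩, ?_⟩, hst⟩
      · rw [← hs1.natDegree_mul ht1, hst, hn]
      · apply isCoprime_of_irreducible_dvd
        · exact fun h => hs1.ne_zero h.1
        · intro z hz h1 h2
          obtain ⟨p, hp, hzp⟩ := exists_mem_normalizedFactors_of_dvd hs1.ne_zero hz h1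
          obtain ⟨p', hp', hzp'⟩ := exists_mem_normalizedFactors_of_dvd ht1.ne_zero hz h2
          have hpp : p = p' := eq_of_monic_of_associated (nf_monic hp) (nf_monic hp')
            (hzp.symm.trans hzp')
          subst hpp
          rw [hs2] at hp
          rw [ht2] at hp'
          exact (Multiset.mem_filter.1 hp').2 (Multiset.mem_filter.1 hp).2
    · simp only [hs2]
      ext p
      simp only [hs, Multiset.mem_toFinset, Multiset.mem_filter]
      constructor
      · exact fun h => h.2
      · exact fun h => ⟨Multiset.mem_toFinset.1 (hS h), h⟩

lemma sum_Mon (n : ℕ) : ∑ N ∈ Mon Fq n, 2 ^ ffOmega N = (Cop Fq n).card := by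
  rw [Finset.card_eq_sum_card_fiberwise (f := fun p => p.1 * p.2) (t := Mon Fq n)]
  · exact Finset.sum_congr rfl fun N hN => (card_fiber hN).symm
  · rintro ⟨a, b⟩ h
    simp only [Finset.mem_coe, mem_C, mem_Mon] at h ⊢
    obtain ⟨⟨ha, hb, hab⟩, hc⟩ := h
    exact ⟨ha.mul hb, by rw [ha.natDegree_mul hb, hab]⟩

lemma card_C_succ (n : ℕ) : ((Cop Fq (n + 1)).card : ℝ) / (Fintype.card Fq : ℝ) ^ (n + 1) =
    n + 2 - n / (Fintype.card Fq : ℝ) := by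
  have hq : (Fintype.card Fq : ℝ) ≠ 0 := by
    exact_mod_cast Fintype.card_ne_zero
  cases n with
  | zero =>
    have h := card_T_eq (Fq := Fq) 1
    rw [card_T] at h
    simp at h
    have h' : ((Cop Fq 1).card : ℝ) = 2 * Fintype.card Fq := by exact_mod_cast h.symm
    simp only [zero_add, h']
    simp [hq]
  | succ n =>
    have h := card_C_rec (Fq := Fq) n
    rw [card_T, card_T] at h
    have h' : ((n : ℝ) + 2 + 1) * (Fintype.card Fq : ℝ) ^ (n + 2) = (Cop Fq (n + 2)).card +
      Fintype.card Fq * ((n + 1) * (Fintype.card Fq : ℝ) ^ n) := by exact_mod_cast h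
    rw [show n + 1 + 1 = n + 2 from rfl, eq_sub_of_add_eq h'.symm]
    push_cast
    field_simp
    ring

lemma main (x : ℕ) : ∑ n ∈ Finset.range (x + 1), ∑ N ∈ Mon Fq n,
      (2 : ℝ) ^ ffOmega N / (Fintype.card Fq : ℝ) ^ N.natDegree
      = ((Fintype.card Fq : ℝ) - 1) / (2 * (Fintype.card Fq : ℝ)) * x ^ 2
        + (3 * (Fintype.card Fq : ℝ) + 1) / (2 * (Fintype.card Fq : ℝ)) * x + 1 := by
  have hq : (Fintype.card Fq : ℝ) ≠ 0 := by
    exact_mod_cast Fintype.card_ne_zero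
  have hs : ∀ n, ∑ N ∈ Mon Fq n, (2 : ℝ) ^ ffOmega N / (Fintype.card Fq : ℝ) ^ N.natDegree =
      (Cop Fq n).card / (Fintype.card Fq : ℝ) ^ n := by
    intro n
    rw [← sum_Mon]
    push_cast
    rw [Finset.sum_div]
    exact Finset.sum_congr rfl fun N hN => by rw [(mem_Mon.1 hN).2]
  simp only [hs]
  induction x with
  | zero =>
    have h := card_T_eq (Fq := Fq) 0
    rw [card_T] at h
    simp at h
    simp [← h]
  | succ n ih =>
    rw [Finset.sum_range_succ, ih, card_C_succ]
    push_cast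
    field_simp
    ring

end FFAux

/-- `∑_{N monic, deg N ≤ x} 2^{ω(N)}/|N| = ((q-1)/(2q))x² + ((3q+1)/(2q))x + 1`. -/
theorem sum_two_pow_omega_div_norm {Fq : Type*} [Field Fq] [Fintype Fq]
    (x : ℕ) (hx : 1 ≤ x) :
    ∑ᶠ (N : Polynomial Fq) (_ : N.Monic ∧ N.natDegree ≤ x),
        (2 : ℝ) ^ ffOmega N / (Fintype.card Fq : ℝ) ^ N.natDegree
      = ((Fintype.card Fq : ℝ) - 1) / (2 * (Fintype.card Fq : ℝ)) * x ^ 2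
        + (3 * (Fintype.card Fq : ℝ) + 1) / (2 * (Fintype.card Fq : ℝ)) * x + 1 := by
  rw [← FFAux.main x, ← Finset.sum_biUnion, ← finsum_mem_finset_eq_sum]
  · apply finsum_congr
    intro N
    have : (N.Monic ∧ N.natDegree ≤ x) ↔
        N ∈ (Finset.range (x + 1)).biUnion (FFAux.Mon Fq) := by
      simp only [Finset.mem_biUnion, Finset.mem_range, FFAux.mem_Mon]
      constructor
      · rintro ⟨h1, h2⟩
        exact ⟨_, by omega, h1, rfl⟩
      · rintro ⟨n, h1, h2, h3⟩
        exact ⟨h2, by omega⟩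
    simp only [this]
  · intro i _ j _ hij
    rw [Function.onFun, Finset.disjoint_left]
    intro N h1 h2
    exact hij ((FFAux.mem_Mon.1 h1).2.symm.trans (FFAux.mem_Mon.1 h2).2)
end

section
/- For every positive integer x, ∑_{N monic in F_q[T], deg N ≤ x} μ(N)²/φ(N) ≥ x. -/
open Polynomial UniqueFactorizationMonoid
open scoped Classical

lemma aux_card_degreeLT {Fq : Type*} [Field Fq] [Fintype Fq] (n : ℕ) :
    Nat.card (degreeLT Fq n) = Fintype.card Fq ^ n := by
  rw [Nat.card_congr (degreeLTEquiv Fq n).toEquiv]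
  simp

lemma aux_finite {Fq : Type*} [Field Fq] [Fintype Fq] (n : ℕ) :
    ((degreeLT Fq n : Submodule Fq Fq[X]) : Set Fq[X]).Finite := by
  have : Finite (degreeLT Fq n) := Finite.of_equiv _ (degreeLTEquiv Fq n).toEquiv.symm
  exact Set.toFinite _

/-- Polynomials of degree `< n`. -/
noncomputable def auxP (Fq : Type*) [Field Fq] [Fintype Fq] (n : ℕ) : Finset Fq[X] :=
  (aux_finite (Fq := Fq) n).toFinset

lemma mem_auxP {Fq : Type*} [Field Fq] [Fintype Fq] (n : ℕ) (f : Fq[X]) :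
    f ∈ auxP Fq n ↔ f.degree < n := by
  simp [auxP, mem_degreeLT]

lemma card_auxP {Fq : Type*} [Field Fq] [Fintype Fq] (n : ℕ) :
    (auxP Fq n).card = Fintype.card Fq ^ n := by
  rw [← aux_card_degreeLT n, auxP, ← Set.ncard_eq_toFinset_card _ (aux_finite n)]
  rfl

/-- Monic polynomials of degree `≤ x`. -/
noncomputable def auxS (Fq : Type*) [Field Fq] [Fintype Fq] (x : ℕ) : Finset Fq[X] :=
  (auxP Fq (x + 1)).filter Monic

lemma mem_auxS {Fq : Type*} [Field Fq] [Fintype Fq] (x : ℕ) (f : Fq[X]) :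
    f ∈ auxS Fq x ↔ f.Monic ∧ f.natDegree ≤ x := by
  rw [auxS, Finset.mem_filter, mem_auxP, and_comm]
  refine and_congr_right fun h => ?_
  rw [degree_eq_natDegree h.ne_zero]
  norm_cast
  omega

lemma aux_radical_monic {Fq : Type*} [Field Fq] (M : Fq[X]) (hM : M ≠ 0) :
    (radical M).Monic := by
  rw [radical]
  apply monic_prod_of_monic
  intro p hp
  rw [mem_primeFactors, Polynomial.mem_normalizedFactors_iff hM] at hp
  exact hp.2.1

/-- Reduced residues. -/
noncomputable def auxC {Fq : Type*} [Field Fq] [Fintype Fq] (N : Fq[X]) : Finset Fq[X] :=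
  (auxP Fq N.natDegree).filter (fun A => IsCoprime A N)

lemma mem_auxC {Fq : Type*} [Field Fq] [Fintype Fq] (N : Fq[X]) (hN : N ≠ 0) (A : Fq[X]) :
    A ∈ auxC N ↔ A.degree < N.degree ∧ IsCoprime A N := by
  rw [auxC, Finset.mem_filter, mem_auxP, degree_eq_natDegree hN]

lemma card_auxC {Fq : Type*} [Field Fq] [Fintype Fq] (N : Fq[X]) (hN : N.Monic) :
    ffPhi N = (auxC N).card := by
  rw [ffPhi]
  split_ifs with h
  · have h1 : N = 1 := hN.natDegree_eq_zero.mp h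
    symm
    rw [Finset.card_eq_one]
    refine ⟨0, ?_⟩
    ext A
    rw [mem_auxC N hN.ne_zero, h1, Finset.mem_singleton]
    constructor
    · rintro ⟨h, -⟩
      by_contra hA
      rw [degree_eq_natDegree hA, degree_one] at h
      norm_cast at h
    · rintro rfl
      simp [isCoprime_one_right]
  · rw [← Nat.card_eq_finsetCard]
    exact Nat.card_congr (Equiv.subtypeEquivRight fun A => (mem_auxC N hN.ne_zero A).symm)

lemma auxC_pos {Fq : Type*} [Field Fq] [Fintype Fq] (N : Fq[X]) (hN : N.Monic) :
    0 < ffPhi N := by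
  by_cases h : N.natDegree = 0
  · simp [ffPhi, h]
  · rw [card_auxC N hN, Finset.card_pos]
    refine ⟨1, ?_⟩
    rw [mem_auxC N hN.ne_zero, degree_one, degree_eq_natDegree hN.ne_zero]
    refine ⟨?_, isCoprime_one_left⟩
    exact_mod_cast Nat.pos_of_ne_zero h

lemma aux_coprime {Fq : Type*} [Field Fq] {M N A B : Fq[X]} (hM : M ≠ 0)
    (hN : radical M = N) (hA : IsCoprime A N) : IsCoprime M (A + N * B) := by
  obtain ⟨n, hn⟩ := exists_dvd_radical_self_pow hM
  rw [hN] at hn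
  have h : IsCoprime N (A + N * B) := (hA.add_mul_left_left B).symm
  exact (h.pow_left (m := n)).of_isCoprime_of_dvd_left hn

lemma aux_count {Fq : Type*} [Field Fq] [Fintype Fq] (x : ℕ) (N : Fq[X]) (hN : N.Monic) :
    ∑ M ∈ (auxS Fq x).filter (fun M => radical M = N),
      ffPhi N * Fintype.card Fq ^ (x - M.natDegree) ≤ Fintype.card Fq ^ x := by
  have e : ∑ M ∈ (auxS Fq x).filter (fun M => radical M = N),
      ffPhi N * Fintype.card Fq ^ (x - M.natDegree) =
      (((auxS Fq x).filter (fun M => radical M = N)).sigma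
        (fun M => auxC N ×ˢ auxP Fq (x - M.natDegree))).card := by
    rw [Finset.card_sigma]
    refine Finset.sum_congr rfl fun M _ => ?_
    rw [Finset.card_product, card_auxP, card_auxC N hN]
  rw [e, ← card_auxP x]
  refine le_trans ?_ (Finset.card_image_le (s := auxP Fq x) (f := fun F => N * F))
  apply Finset.card_le_card_of_injOn (fun t => t.1 * (t.2.1 + N * t.2.2))
  · rintro ⟨M, A, B⟩ h
    simp only [Finset.coe_sigma, Set.mem_sigma_iff, Finset.mem_coe, Finset.mem_filter,
      Finset.mem_product, mem_auxS, mem_auxC N hN.ne_zero, mem_auxP] at h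
    obtain ⟨⟨⟨hM, hx⟩, hr⟩, ⟨hA, -⟩, hB⟩ := h
    simp only [Finset.coe_image, Set.mem_image, Finset.mem_coe, mem_auxP]
    obtain ⟨K, hK⟩ : N ∣ M := hr ▸ radical_dvd_self
    refine ⟨K * (A + N * B), ?_, by rw [hK]; ring⟩
    have hK0 : K ≠ 0 := by
      rintro rfl
      exact hM.ne_zero (by simpa using hK)
    have hd : M.natDegree = N.natDegree + K.natDegree := by
      rw [hK, natDegree_mul hN.ne_zero hK0]
    have h2 : (A + N * B).degree < ((x - K.natDegree : ℕ) : WithBot ℕ) := by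
      refine lt_of_le_of_lt (degree_add_le _ _) (max_lt ?_ ?_)
      · refine lt_of_lt_of_le hA ?_
        rw [degree_eq_natDegree hN.ne_zero]
        norm_cast
        omega
      · by_cases hB0 : B = 0
        · simp [hB0]
        rw [degree_mul, degree_eq_natDegree hN.ne_zero, degree_eq_natDegree hB0]
        rw [degree_eq_natDegree hB0] at hB
        norm_cast at hB ⊢
        omega
    by_cases hG : A + N * B = 0
    · simp [hG]
    rw [degree_mul, degree_eq_natDegree hK0, degree_eq_natDegree hG]
    rw [degree_eq_natDegree hG] at h2
    norm_cast at h2 ⊢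
    omega
  · rintro ⟨M, A, B⟩ h ⟨M', A', B'⟩ h' heq
    simp only [Finset.coe_sigma, Set.mem_sigma_iff, Finset.mem_coe, Finset.mem_filter,
      Finset.mem_product, mem_auxS, mem_auxC N hN.ne_zero, mem_auxP] at h h'
    obtain ⟨⟨⟨hM, hx⟩, hr⟩, ⟨hA, hAc⟩, hB⟩ := h
    obtain ⟨⟨⟨hM', hx'⟩, hr'⟩, ⟨hA', hAc'⟩, hB'⟩ := h'
    simp only at heq
    have d1 : M ∣ M' :=
      (aux_coprime hM.ne_zero hr hAc').dvd_of_dvd_mul_right (Dvd.intro _ heq)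
    have d2 : M' ∣ M :=
      (aux_coprime hM'.ne_zero hr' hAc).dvd_of_dvd_mul_right (Dvd.intro _ heq.symm)
    have hMM : M = M' := eq_of_monic_of_associated hM hM' (associated_of_dvd_dvd d1 d2)
    subst hMM
    have h3 := mul_left_cancel₀ hM.ne_zero heq
    have u1 := div_modByMonic_unique B A hN ⟨rfl, hA⟩
    have u2 := div_modByMonic_unique B' A' hN ⟨rfl, hA'⟩
    rw [h3] at u1
    obtain rfl := u1.1.symm.trans u2.1
    obtain rfl := u1.2.symm.trans u2.2
    rfl

lemma aux_fiber {Fq : Type*} [Field Fq] [Fintype Fq] (x : ℕ) (N : Fq[X]) (hN : N.Monic) :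
    ∑ M ∈ (auxS Fq x).filter (fun M => radical M = N),
      ((Fintype.card Fq : ℝ) ^ M.natDegree)⁻¹ ≤ (ffMu N : ℝ) ^ 2 / ffPhi N := by
  by_cases hs : Squarefree N
  · have hmu : (ffMu N : ℝ) ^ 2 = 1 := by
      simp [ffMu, hs, ← pow_mul, mul_comm _ 2]
    have hq : (0 : ℝ) < Fintype.card Fq := by exact_mod_cast Fintype.card_pos
    have hphi : (0 : ℝ) < ffPhi N := by exact_mod_cast auxC_pos N hN
    rw [hmu, le_div_iff₀ hphi]
    have h : ((∑ M ∈ (auxS Fq x).filter (fun M => radical M = N),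
      ffPhi N * Fintype.card Fq ^ (x - M.natDegree) : ℕ) : ℝ) ≤ ((Fintype.card Fq ^ x : ℕ) : ℝ) :=
      by exact_mod_cast aux_count x N hN
    push_cast at h
    have h5 : 0 < (Fintype.card Fq : ℝ) ^ x := by positivity
    refine le_of_mul_le_mul_right ?_ h5
    rw [one_mul]
    refine le_trans (le_of_eq ?_) h
    rw [Finset.sum_mul, Finset.sum_mul]
    refine Finset.sum_congr rfl fun M hM => ?_
    rw [Finset.mem_filter, mem_auxS] at hM
    rw [pow_sub₀ _ hq.ne' hM.1.2]
    ring
  · rw [Finset.sum_eq_zero]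
    · positivity
    · intro M hM
      rw [Finset.mem_filter] at hM
      exact absurd (hM.2 ▸ squarefree_radical) hs

lemma aux_total {Fq : Type*} [Field Fq] [Fintype Fq] (x : ℕ) :
    (x : ℝ) ≤ ∑ M ∈ auxS Fq x, ((Fintype.card Fq : ℝ) ^ M.natDegree)⁻¹ := by
  have hq : (0 : ℝ) < Fintype.card Fq := by exact_mod_cast Fintype.card_pos
  have hm : ∀ M ∈ auxS Fq x, M.natDegree ∈ Finset.range (x + 1) := by
    intro M hM
    rw [mem_auxS] at hM
    simp; omega
  rw [← Finset.sum_fiberwise_of_maps_to hm]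
  have h1 : ∀ d ∈ Finset.range (x + 1), (1 : ℝ) ≤
      ∑ M ∈ (auxS Fq x).filter (fun M => M.natDegree = d),
        ((Fintype.card Fq : ℝ) ^ M.natDegree)⁻¹ := by
    intro d hd
    have hd' : d ≤ x := by simp at hd; omega
    have hc : Fintype.card Fq ^ d ≤ ((auxS Fq x).filter (fun M => M.natDegree = d)).card := by
      rw [← card_auxP d]
      apply Finset.card_le_card_of_injOn (fun f => X ^ d + f)
      · intro f hf
        have hf' : f.degree < d := by simpa [mem_auxP] using hf
        have hn : (X ^ d + f).natDegree = d := by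
          rw [natDegree_add_eq_left_of_degree_lt (by simpa using hf')]
          simp
        simp only [Finset.coe_filter, Set.mem_ofPred_eq, mem_auxS]
        exact ⟨⟨monic_X_pow_add hf', hn.le.trans hd'⟩, hn⟩
      · intro f _ g _ h
        exact add_left_cancel h
    have : ∑ M ∈ (auxS Fq x).filter (fun M => M.natDegree = d),
        ((Fintype.card Fq : ℝ) ^ M.natDegree)⁻¹ =
        ((auxS Fq x).filter (fun M => M.natDegree = d)).card * ((Fintype.card Fq : ℝ) ^ d)⁻¹ := by
      rw [← nsmul_eq_mul, ← Finset.sum_const]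
      refine Finset.sum_congr rfl fun M hM => ?_
      rw [(Finset.mem_filter.mp hM).2]
    rw [this, ← div_eq_mul_inv, one_le_div (by positivity)]
    exact_mod_cast hc
  have h2 := Finset.sum_le_sum h1
  simp only [Finset.sum_const, Finset.card_range, nsmul_eq_mul, mul_one] at h2
  push_cast at h2
  linarith

/-- `∑_{N monic, deg N ≤ x} μ(N)²/φ(N) ≥ x`. -/
theorem sum_mu_sq_div_phi_lower {Fq : Type*} [Field Fq] [Fintype Fq] (x : ℕ) (hx : 1 ≤ x) :
    (x : ℝ) ≤ ∑ᶠ (N : Polynomial Fq) (_ : N.Monic ∧ N.natDegree ≤ x),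
        ((ffMu N : ℝ)) ^ 2 / ffPhi N := by
  rw [finsum_cond_eq_sum_of_cond_iff (t := auxS Fq x) _ (fun {N} _ => (mem_auxS x N).symm)]
  refine (aux_total (Fq := Fq) x).trans ?_
  have hm : ∀ M ∈ auxS Fq x, radical M ∈ auxS Fq x := by
    intro M hM
    rw [mem_auxS] at hM ⊢
    exact ⟨aux_radical_monic M hM.1.ne_zero,
      (natDegree_le_of_dvd radical_dvd_self hM.1.ne_zero).trans hM.2⟩
  rw [← Finset.sum_fiberwise_of_maps_to hm]
  exact Finset.sum_le_sum fun N hN => aux_fiber x N ((mem_auxS x N).mp hN).1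
end

section
/- Let F be a monic polynomial in F_q[T], a ∈ F_q*, and z₁, z₂ nonnegative integers with z₁ + z₂ > (19/10)·deg F. Then the number of quadruples (A,B,C,D) of monic polynomials with deg(AB) = z₁, deg(CD) = z₂, gcd(ABCD, F) = 1, AC ≡ a·BD (mod F), and AC ≠ BD, is O(q^{z₁+z₂}·(z₁+z₂)³/φ(F)). -/
open Polynomial
open scoped Classical

section FF
variable {Fq : Type} [Field Fq] [Fintype Fq]

theorem ff_finite_degreeLT (n : ℕ) : {p : Fq[X] | p.degree < n}.Finite := by
  have e := (degreeLTEquiv Fq n).toEquiv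
  have : Finite (degreeLT Fq n) := Finite.of_equiv _ e.symm
  have h : ((degreeLT Fq n : Submodule Fq Fq[X]) : Set Fq[X]).Finite := Set.toFinite _
  refine h.subset ?_
  intro p hp
  exact mem_degreeLT.2 hp

/-- polynomials of degree `< n` -/
noncomputable def polyLT (Fq : Type) [Field Fq] [Fintype Fq] (n : ℕ) : Finset Fq[X] :=
  (ff_finite_degreeLT (Fq := Fq) n).toFinset

theorem mem_polyLT {n : ℕ} {p : Fq[X]} : p ∈ polyLT Fq n ↔ p.degree < n := by
  simp [polyLT]

theorem card_polyLT (n : ℕ) : (polyLT Fq n).card = Fintype.card Fq ^ n := by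
  have e := (degreeLTEquiv Fq n).toEquiv
  have h1 : Nat.card (degreeLT Fq n) = Fintype.card Fq ^ n := by
    rw [Nat.card_congr e]; simp
  rw [← h1, polyLT, ← Set.ncard_eq_toFinset_card _ (ff_finite_degreeLT (Fq := Fq) n), ← Nat.card_coe_set_eq]
  apply Nat.card_congr
  refine Equiv.subtypeEquivRight ?_
  intro p; exact mem_degreeLT.symm

/-- monic polynomials of degree `n` -/
noncomputable def monEq (Fq : Type) [Field Fq] [Fintype Fq] (n : ℕ) : Finset Fq[X] :=
  (polyLT Fq (n+1)).filter (fun p => p.Monic ∧ p.natDegree = n)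

theorem mem_monEq {n : ℕ} {p : Fq[X]} : p ∈ monEq Fq n ↔ p.Monic ∧ p.natDegree = n := by
  simp only [monEq, Finset.mem_filter, mem_polyLT, and_iff_right_iff_imp]
  rintro ⟨h1, h2⟩
  rw [degree_eq_natDegree h1.ne_zero, h2]
  exact_mod_cast Nat.lt_succ_self n

theorem degree_sub_lt_of_monic {n : ℕ} {p r : Fq[X]} (hp : p ∈ monEq Fq n) (hr : r ∈ monEq Fq n) :
    (p - r).degree < n := by
  rw [mem_monEq] at hp hr
  have h1 : p.degree = n := by rw [degree_eq_natDegree hp.1.ne_zero, hp.2]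
  have h2 : r.degree = n := by rw [degree_eq_natDegree hr.1.ne_zero, hr.2]
  rw [← h1]
  exact degree_sub_lt_left (h1.trans h2.symm) hp.1.ne_zero (by rw [hp.1.leadingCoeff, hr.1.leadingCoeff])

/-- counting lemma -/
theorem card_le_of_diff (S : Finset Fq[X]) (G : Fq[X]) (hG : G.Monic) (n : ℕ) (hn : G.natDegree ≤ n)
    (h : ∀ x ∈ S, ∀ y ∈ S, G ∣ x - y ∧ (x - y).degree < n) :
    S.card ≤ Fintype.card Fq ^ (n - G.natDegree) := by
  rcases S.eq_empty_or_nonempty with rfl | ⟨x0, hx0⟩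
  · simp
  rw [← card_polyLT]
  refine Finset.card_le_card_of_injOn (fun x => (x - x0) / G) ?_ ?_
  · intro x hx
    obtain ⟨⟨c, hc⟩, h2⟩ := h x hx x0 hx0
    simp only [Finset.mem_coe, mem_polyLT]
    rw [hc, mul_div_cancel_left₀ _ hG.ne_zero]
    rw [hc] at h2
    by_cases hc0 : c = 0
    · subst hc0; simp
    rw [degree_mul, degree_eq_natDegree hc0, degree_eq_natDegree hG.ne_zero] at h2
    rw [degree_eq_natDegree hc0]
    norm_cast at h2 ⊢
    omega
  · intro x hx y hy hxy
    obtain ⟨⟨c, hc⟩, -⟩ := h x hx x0 hx0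
    obtain ⟨⟨d, hd⟩, -⟩ := h y hy x0 hx0
    simp only at hxy
    rw [hc, hd, mul_div_cancel_left₀ _ hG.ne_zero, mul_div_cancel_left₀ _ hG.ne_zero] at hxy
    subst hxy
    have := hc.trans hd.symm
    simpa using this

theorem card_monEq_le (n : ℕ) : (monEq Fq n).card ≤ Fintype.card Fq ^ n := by
  have := card_le_of_diff (monEq Fq n) 1 monic_one n (by simp)
    (fun x hx y hy => ⟨one_dvd _, degree_sub_lt_of_monic hx hy⟩)
  simpa using this

/-- monic polynomials of degree at most `y` -/
noncomputable def monLE (Fq : Type) [Field Fq] [Fintype Fq] (y : ℕ) : Finset Fq[X] :=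
  (polyLT Fq (y+1)).filter (fun p => p.Monic)

theorem mem_monLE {n : ℕ} {p : Fq[X]} : p ∈ monLE Fq n ↔ p.Monic ∧ p.natDegree ≤ n := by
  simp only [monLE, Finset.mem_filter, mem_polyLT]
  constructor
  · rintro ⟨h1, h2⟩
    rw [degree_eq_natDegree h2.ne_zero] at h1
    norm_cast at h1
    exact ⟨h2, by omega⟩
  · rintro ⟨h1, h2⟩
    rw [degree_eq_natDegree h1.ne_zero]
    norm_cast
    exact ⟨by omega, h1⟩

/-- sum of a nonnegative function of the degree -/
theorem sum_monLE_le (y : ℕ) (g : ℕ → ℝ) (hg : ∀ d, 0 ≤ g d) :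
    ∑ K ∈ monLE Fq y, g K.natDegree ≤
      ∑ d ∈ Finset.range (y+1), (Fintype.card Fq : ℝ)^d * g d := by
  have hm : ∀ K ∈ monLE Fq y, K.natDegree ∈ Finset.range (y+1) := by
    intro K hK; rw [mem_monLE] at hK; simp; omega
  rw [← Finset.sum_fiberwise_of_maps_to hm]
  apply Finset.sum_le_sum
  intro d hd
  have : ∀ K ∈ (monLE Fq y).filter (fun K => K.natDegree = d), g K.natDegree = g d := by
    intro K hK; rw [(Finset.mem_filter.1 hK).2]
  rw [Finset.sum_congr rfl this, Finset.sum_const, nsmul_eq_mul]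
  apply mul_le_mul_of_nonneg_right _ (hg d)
  have h1 : ((monLE Fq y).filter (fun K => K.natDegree = d)).card ≤ (monEq Fq d).card := by
    apply Finset.card_le_card
    intro K hK
    simp only [Finset.mem_filter, mem_monLE] at hK
    exact mem_monEq.2 ⟨hK.1.1, hK.2⟩
  exact_mod_cast h1.trans (card_monEq_le d)

/-- monic divisors -/
noncomputable def mdiv (N : Fq[X]) : Finset Fq[X] :=
  (monLE Fq N.natDegree).filter (fun K => K ∣ N)

theorem mem_mdiv {N K : Fq[X]} (hN : N ≠ 0) : K ∈ mdiv N ↔ K.Monic ∧ K ∣ N := by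
  simp only [mdiv, Finset.mem_filter, mem_monLE]
  constructor
  · rintro ⟨⟨h1, _⟩, h2⟩; exact ⟨h1, h2⟩
  · rintro ⟨h1, h2⟩; exact ⟨⟨h1, natDegree_le_of_dvd h2 hN⟩, h2⟩

/-- monic irreducibles of degree `d` -/
noncomputable def irrEq (Fq : Type) [Field Fq] [Fintype Fq] (d : ℕ) : Finset Fq[X] :=
  (monEq Fq d).filter (fun p => Irreducible p)

theorem card_irrEq (d : ℕ) (hd : 1 ≤ d) : d * (irrEq Fq d).card ≤ Fintype.card Fq ^ d := by
  have hne : (X ^ (Fintype.card Fq) ^ d - X : Fq[X]) ≠ 0 :=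
    FiniteField.X_pow_card_pow_sub_X_ne_zero _ (by omega) Fintype.one_lt_card
  have hdvd : ∏ p ∈ irrEq Fq d, p ∣ (X ^ (Fintype.card Fq) ^ d - X : Fq[X]) := by
    apply Finset.prod_dvd_of_coprime
    · intro p hp r hr hpr
      simp only [irrEq, Finset.coe_filter, Set.mem_ofPred_eq, mem_monEq] at hp hr
      refine (hp.2.coprime_iff_not_dvd).2 ?_
      intro hdv
      exact hpr (eq_of_monic_of_associated hp.1.1 hr.1.1 (hp.2.associated_of_dvd hr.2 hdv))
    · intro p hp
      simp only [irrEq, Finset.mem_filter, mem_monEq] at hp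
      have := (hp.2.natDegree_dvd_iff_dvd_X_pow_card_pow_sub_X (n := d)).1 (by rw [hp.1.2])
      rwa [Nat.card_eq_fintype_card] at this
  have h := natDegree_le_of_dvd hdvd hne
  rw [FiniteField.X_pow_card_pow_sub_X_natDegree_eq _ (by omega) Fintype.one_lt_card,
    natDegree_prod_of_monic] at h
  · refine le_trans (le_of_eq ?_) h
    rw [Finset.sum_congr rfl (g := fun _ => d)]
    · simp [mul_comm]
    · intro p hp
      simp only [irrEq, Finset.mem_filter, mem_monEq] at hp
      exact hp.1.2
  · intro p hp
    simp only [irrEq, Finset.mem_filter, mem_monEq] at hp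
    exact hp.1.1

end FF

set_option linter.unusedSectionVars false
section FF
variable {Fq : Type} [Field Fq] [Fintype Fq]

theorem sum_dvd_le (T : Finset Fq[X]) (h : Fq[X]) (hh : h.Monic)
    (hm : ∀ K ∈ T, K.Monic)
    (hT : ∀ K, h * K ∈ T → K ∈ T) (v : ℝ) (hv : 0 ≤ v) :
    ∑ K ∈ T.filter (fun K => h ∣ K), v ^ K.natDegree ≤
      v ^ h.natDegree * ∑ K ∈ T, v ^ K.natDegree := by
  have hsub : T.filter (fun K => h ∣ K) ⊆ (T.filter (fun K => h * K ∈ T)).image (fun K => h * K) := by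
    intro K hK
    obtain ⟨h1, c, rfl⟩ := Finset.mem_filter.1 hK
    exact Finset.mem_image.2 ⟨c, Finset.mem_filter.2 ⟨hT c h1, h1⟩, rfl⟩
  refine (Finset.sum_le_sum_of_subset_of_nonneg hsub (fun _ _ _ => by positivity)).trans ?_
  rw [Finset.sum_image (fun a _ b _ hab => mul_left_cancel₀ hh.ne_zero hab), Finset.mul_sum]
  refine (Finset.sum_le_sum (g := fun K => v ^ h.natDegree * v ^ K.natDegree) ?_).trans
    (Finset.sum_le_sum_of_subset_of_nonneg (Finset.filter_subset _ _) (fun _ _ _ => by positivity))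
  intro K hK
  have := hm K (Finset.mem_filter.1 hK).1
  rw [hh.natDegree_mul this, pow_add]

/-- monic polynomials of degree at most `y` all of whose monic prime factors are in `s` -/
noncomputable def smoothSet (s : Finset Fq[X]) (y : ℕ) : Finset Fq[X] :=
  (monLE Fq y).filter (fun K => ∀ p : Fq[X], p.Monic → Irreducible p → p ∣ K → p ∈ s)

theorem mem_smoothSet {s : Finset Fq[X]} {y : ℕ} {K : Fq[X]} : K ∈ smoothSet s y ↔
    (K.Monic ∧ K.natDegree ≤ y) ∧ ∀ p : Fq[X], p.Monic → Irreducible p → p ∣ K → p ∈ s := by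
  simp [smoothSet, mem_monLE]

theorem smoothSet_of_mul {s : Finset Fq[X]} {y : ℕ} {h K : Fq[X]} (hh : h.Monic)
    (hK : h * K ∈ smoothSet s y) : K ∈ smoothSet s y := by
  rw [mem_smoothSet] at hK ⊢
  have hKm : K.Monic := hh.of_mul_monic_left hK.1.1
  refine ⟨⟨hKm, ?_⟩, fun p h1 h2 h3 => hK.2 p h1 h2 (h3.mul_left _)⟩
  have := hK.1.2
  rw [hh.natDegree_mul hKm] at this
  omega

theorem exists_monic_irreducible_dvd {K : Fq[X]} (hK : K.Monic) (h1 : K ≠ 1) :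
    ∃ p : Fq[X], p.Monic ∧ Irreducible p ∧ p ∣ K := by
  have hu : ¬ IsUnit K := fun h => h1 (hK.eq_one_of_isUnit h)
  exact exists_monic_irreducible_factor K hu

theorem euler_le (s : Finset Fq[X]) (hs : ∀ p ∈ s, p.Monic ∧ Irreducible p) (y : ℕ)
    (v : ℝ) (hv : 0 ≤ v) (hv1 : v < 1) :
    ∑ K ∈ smoothSet s y, v ^ K.natDegree ≤ ∏ p ∈ s, (1 - v ^ p.natDegree)⁻¹ := by
  induction s using Finset.induction_on with
  | empty =>
    have : smoothSet (∅ : Finset Fq[X]) y ⊆ {1} := by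
      intro K hK
      rw [mem_smoothSet] at hK
      by_contra hne
      obtain ⟨p, h1, h2, h3⟩ := exists_monic_irreducible_dvd hK.1.1 (by simpa using hne)
      simpa using hK.2 p h1 h2 h3
    refine (Finset.sum_le_sum_of_subset_of_nonneg this (fun _ _ _ => by positivity)).trans ?_
    simp
  | insert p s hps ih =>
    have ih := ih (fun r hr => hs r (Finset.mem_insert_of_mem hr))
    obtain ⟨hpm, hpi⟩ := hs p (Finset.mem_insert_self _ _)
    rw [Finset.prod_insert hps]
    have hlt : v ^ p.natDegree < 1 := pow_lt_one₀ hv hv1 hpi.natDegree_pos.ne'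
    have hpos : 0 < 1 - v ^ p.natDegree := by linarith
    have h1 := sum_dvd_le (smoothSet (insert p s) y) p hpm (fun K hK => (mem_smoothSet.1 hK).1.1)
      (fun K hK => smoothSet_of_mul hpm hK) v hv
    have h2 : ∑ K ∈ (smoothSet (insert p s) y).filter (fun K => ¬ p ∣ K), v ^ K.natDegree ≤
        ∑ K ∈ smoothSet s y, v ^ K.natDegree := by
      apply Finset.sum_le_sum_of_subset_of_nonneg _ (fun _ _ _ => by positivity)
      intro K hK
      rw [Finset.mem_filter, mem_smoothSet] at hK
      rw [mem_smoothSet]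
      refine ⟨hK.1.1, fun r h1 h2 h3 => ?_⟩
      rcases Finset.mem_insert.1 (hK.1.2 r h1 h2 h3) with h | h
      · subst h; exact absurd h3 hK.2
      · exact h
    have h3 := Finset.sum_filter_add_sum_filter_not (smoothSet (insert p s) y) (fun K => p ∣ K)
      (fun K => v ^ K.natDegree)
    rw [inv_mul_eq_div, le_div_iff₀ hpos]
    nlinarith

theorem one_lt_q : (2 : ℝ) ≤ Fintype.card Fq := by
  exact_mod_cast Fintype.one_lt_card

theorem sum_sigma_le (T : Finset Fq[X]) (y : ℕ) (hm : ∀ K ∈ T, K.Monic ∧ K.natDegree ≤ y)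
    (hT : ∀ h K : Fq[X], h.Monic → h * K ∈ T → K ∈ T) (v : ℝ) (hv : 0 ≤ v) (hv1 : v < 1) :
    ∑ K ∈ T, v ^ K.natDegree * ∑ h ∈ mdiv K, ((Fintype.card Fq : ℝ) ^ h.natDegree)⁻¹ ≤
      (1 - v)⁻¹ * ∑ K ∈ T, v ^ K.natDegree := by
  set q : ℝ := (Fintype.card Fq : ℝ) with hq
  have hq2 : (2:ℝ) ≤ q := one_lt_q
  have hS : 0 ≤ ∑ K ∈ T, v ^ K.natDegree := Finset.sum_nonneg (fun _ _ => by positivity)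
  calc ∑ K ∈ T, v ^ K.natDegree * ∑ h ∈ mdiv K, (q ^ h.natDegree)⁻¹
      ≤ ∑ K ∈ T, ∑ h ∈ monLE Fq y, (if h ∣ K then v ^ K.natDegree * (q ^ h.natDegree)⁻¹ else 0) := by
        apply Finset.sum_le_sum
        intro K hK
        rw [Finset.mul_sum, ← Finset.sum_filter]
        apply Finset.sum_le_sum_of_subset_of_nonneg _ (fun _ _ _ => by positivity)
        intro h hh
        rw [mem_mdiv (hm K hK).1.ne_zero] at hh
        rw [Finset.mem_filter, mem_monLE]
        exact ⟨⟨hh.1, (natDegree_le_of_dvd hh.2 (hm K hK).1.ne_zero).trans (hm K hK).2⟩, hh.2⟩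
    _ = ∑ h ∈ monLE Fq y, ∑ K ∈ T.filter (fun K => h ∣ K), v ^ K.natDegree * (q ^ h.natDegree)⁻¹ := by
        rw [Finset.sum_comm]
        apply Finset.sum_congr rfl
        intro h _
        rw [Finset.sum_filter]
    _ ≤ ∑ h ∈ monLE Fq y, (v ^ h.natDegree * (q ^ h.natDegree)⁻¹) * ∑ K ∈ T, v ^ K.natDegree := by
        apply Finset.sum_le_sum
        intro h hh
        rw [← Finset.sum_mul]
        have := sum_dvd_le T h (mem_monLE.1 hh).1 (fun K hK => (hm K hK).1)
          (fun K hK => hT h K (mem_monLE.1 hh).1 hK) v hv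
        have h2 : 0 ≤ (q ^ h.natDegree)⁻¹ := by positivity
        calc _ ≤ (v ^ h.natDegree * ∑ K ∈ T, v ^ K.natDegree) * (q ^ h.natDegree)⁻¹ :=
              mul_le_mul_of_nonneg_right this h2
          _ = _ := by ring
    _ ≤ (1 - v)⁻¹ * ∑ K ∈ T, v ^ K.natDegree := by
        rw [← Finset.sum_mul]
        apply mul_le_mul_of_nonneg_right _ hS
        refine (sum_monLE_le y (fun d => v ^ d * (q ^ d)⁻¹) (fun d => by positivity)).trans ?_
        have : ∀ d ∈ Finset.range (y+1), q ^ d * (v ^ d * (q ^ d)⁻¹) = v ^ d := by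
          intro d _
          have : q ^ d ≠ 0 := by positivity
          field_simp
        rw [Finset.sum_congr rfl this]
        rw [← tsum_geometric_of_lt_one hv hv1]
        exact (summable_geometric_of_lt_one hv hv1).sum_le_tsum _ (fun _ _ => by positivity)

theorem card_mdiv_mul_irr {K p : Fq[X]} (hK : K.Monic) (hp : p.Monic) (hi : Irreducible p) :
    (mdiv (K * p)).card ≤ 2 * (mdiv K).card := by
  have hsub : mdiv (K * p) ⊆ mdiv K ∪ (mdiv K).image (fun D => p * D) := by
    intro D hD
    rw [mem_mdiv (hK.mul hp).ne_zero] at hD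
    rw [Finset.mem_union, Finset.mem_image, mem_mdiv hK.ne_zero]
    by_cases hpD : p ∣ D
    · right
      obtain ⟨c, rfl⟩ := hpD
      have hc : c.Monic := hp.of_mul_monic_left hD.1
      refine ⟨c, (mem_mdiv hK.ne_zero).2 ⟨hc, ?_⟩, rfl⟩
      have := hD.2
      rw [mul_comm K p] at this
      exact (mul_dvd_mul_iff_left hp.ne_zero).1 this
    · left
      refine ⟨hD.1, ?_⟩
      exact ((hi.coprime_iff_not_dvd.2 hpD : IsCoprime p D).symm).dvd_of_dvd_mul_right hD.2
  refine (Finset.card_le_card hsub).trans ((Finset.card_union_le _ _).trans ?_)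
  have := Finset.card_image_le (s := mdiv K) (f := fun D => p * D)
  omega

theorem card_mdiv_mul_list (l : List Fq[X]) (hl : ∀ p ∈ l, p.Monic ∧ Irreducible p) :
    ∀ K : Fq[X], K.Monic → (mdiv (K * l.prod)).card ≤ 2 ^ l.length * (mdiv K).card := by
  induction l with
  | nil => intro K hK; simp
  | cons p l ih =>
    intro K hK
    have hp := hl p (by simp)
    have h1 := ih (fun r hr => hl r (by simp [hr])) (K * p) (hK.mul hp.1)
    have h2 := card_mdiv_mul_irr hK hp.1 hp.2
    rw [List.prod_cons, ← mul_assoc, List.length_cons, pow_succ]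
    refine h1.trans ?_
    rw [mul_assoc]
    exact Nat.mul_le_mul_left _ h2

/-- pairing -/
theorem pair_le {K : Fq[X]} (hK : K.Monic) (u : ℝ) (hu : 0 ≤ u) :
    ((mdiv K).card : ℝ) * u ^ K.natDegree ≤ ∑ D ∈ mdiv K, (u ^ 2) ^ D.natDegree := by
  have hmem : ∀ D ∈ mdiv K, D.Monic ∧ K / D ∈ mdiv K ∧ D * (K / D) = K := by
    intro D hD
    rw [mem_mdiv hK.ne_zero] at hD
    obtain ⟨h1, c, rfl⟩ := hD
    have hc := h1.of_mul_monic_left hK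
    rw [mul_div_cancel_left₀ _ h1.ne_zero]
    exact ⟨h1, (mem_mdiv hK.ne_zero).2 ⟨hc, Dvd.intro_left _ rfl⟩, rfl⟩
  have hinv : ∑ D ∈ mdiv K, (u ^ 2) ^ (K / D).natDegree = ∑ D ∈ mdiv K, (u ^ 2) ^ D.natDegree := by
    apply Finset.sum_bij' (fun D _ => K / D) (fun D _ => K / D)
    · intro D hD; exact (hmem D hD).2.1
    · intro D hD; exact (hmem D hD).2.1
    · intro D hD
      obtain ⟨h1, h2, h3⟩ := hmem D hD
      have h4 := (hmem _ h2).1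
      conv_lhs => rw [← h3]
      conv_lhs => arg 2; rw [h3]
      exact mul_div_cancel_right₀ _ h4.ne_zero
    · intro D hD
      obtain ⟨h1, h2, h3⟩ := hmem D hD
      have h4 := (hmem _ h2).1
      conv_lhs => rw [← h3]
      conv_lhs => arg 2; rw [h3]
      exact mul_div_cancel_right₀ _ h4.ne_zero
    · intro D hD; rfl
  have h2 : ∑ D ∈ mdiv K, (2 * u ^ K.natDegree) ≤
      ∑ D ∈ mdiv K, ((u ^ 2) ^ D.natDegree + (u ^ 2) ^ (K / D).natDegree) := by
    apply Finset.sum_le_sum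
    intro D hD
    obtain ⟨h1, h2, h3⟩ := hmem D hD
    have h4 := (hmem _ h2).1
    have h5 : K.natDegree = D.natDegree + (K / D).natDegree := by
      rw [← h1.natDegree_mul h4, h3]
    have e : ∀ n : ℕ, (u ^ 2) ^ n = (u ^ n) ^ 2 := by
      intro n; rw [← pow_mul, ← pow_mul, mul_comm]
    rw [h5, pow_add, e, e]
    nlinarith [sq_nonneg (u ^ D.natDegree - u ^ (K/D).natDegree)]
  rw [Finset.sum_add_distrib, hinv, Finset.sum_const, nsmul_eq_mul] at h2
  linarith

end FF

section FF
variable {Fq : Type} [Field Fq] [Fintype Fq]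

/-- monic irreducibles of degree at most `m` -/
noncomputable def irrLE (Fq : Type) [Field Fq] [Fintype Fq] (m : ℕ) : Finset Fq[X] :=
  (monLE Fq m).filter (fun p => Irreducible p)

theorem mem_irrLE {m : ℕ} {p : Fq[X]} :
    p ∈ irrLE Fq m ↔ (p.Monic ∧ p.natDegree ≤ m) ∧ Irreducible p := by
  simp [irrLE, mem_monLE]

theorem sum_irrLE_le (m : ℕ) (g : ℕ → ℝ) (hg : ∀ d, 0 ≤ g d) :
    ∑ p ∈ irrLE Fq m, g p.natDegree ≤
      ∑ d ∈ Finset.Icc 1 m, ((Fintype.card Fq : ℝ)^d / d) * g d := by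
  have hm : ∀ K ∈ irrLE Fq m, K.natDegree ∈ Finset.Icc 1 m := by
    intro K hK; rw [mem_irrLE] at hK; rw [Finset.mem_Icc]; exact ⟨hK.2.natDegree_pos, hK.1.2⟩
  rw [← Finset.sum_fiberwise_of_maps_to hm]
  apply Finset.sum_le_sum
  intro d hd
  have : ∀ K ∈ (irrLE Fq m).filter (fun K => K.natDegree = d), g K.natDegree = g d := by
    intro K hK; rw [(Finset.mem_filter.1 hK).2]
  rw [Finset.sum_congr rfl this, Finset.sum_const, nsmul_eq_mul]
  apply mul_le_mul_of_nonneg_right _ (hg d)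
  have h1 : ((irrLE Fq m).filter (fun K => K.natDegree = d)).card ≤ (irrEq Fq d).card := by
    apply Finset.card_le_card
    intro K hK
    simp only [Finset.mem_filter, mem_irrLE] at hK
    exact Finset.mem_filter.2 ⟨mem_monEq.2 ⟨hK.1.1.1, hK.2⟩, hK.1.2⟩
  have hd1 : 1 ≤ d := (Finset.mem_Icc.1 hd).1
  have hd0 : (0:ℝ) < d := by exact_mod_cast hd1
  rw [le_div_iff₀ hd0]
  have h2 := card_irrEq (Fq := Fq) d hd1
  have h3 : ((irrLE Fq m).filter (fun K => K.natDegree = d)).card * d ≤ Fintype.card Fq ^ d := by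
    calc _ ≤ (irrEq Fq d).card * d := Nat.mul_le_mul_right _ h1
      _ ≤ _ := by rw [mul_comm]; exact h2
  exact_mod_cast h3

theorem pow_sub_one_le_aux (t : ℝ) (ht : 1 ≤ t) (d : ℕ) : t ^ d - 1 ≤ d * t ^ d * (t - 1) := by
  induction d with
  | zero => simp
  | succ d ih =>
    have h1 : 1 ≤ t ^ d := one_le_pow₀ ht
    have h2 : 0 ≤ t - 1 := by linarith
    push_cast
    rw [pow_succ]
    have h3 : t * (t ^ d - 1) ≤ t * (d * t ^ d * (t - 1)) :=
      mul_le_mul_of_nonneg_left ih (by linarith)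
    have h4 : 1 * (t - 1) ≤ (t ^ d * t) * (t - 1) :=
      mul_le_mul_of_nonneg_right (by nlinarith) h2
    nlinarith

theorem prod_dyadic_le : ∃ C : ℝ, 0 < C ∧ ∀ (Fq : Type) [Field Fq] [Fintype Fq] (m : ℕ) (t : ℝ),
    1 ≤ m → 1 ≤ t → t ^ m = 2 ^ 20 → t ^ 4 ≤ (Fintype.card Fq : ℝ) →
    ∏ p ∈ irrLE Fq m, (1 - (t / (Fintype.card Fq : ℝ)) ^ p.natDegree)⁻¹ ≤ C * m := by
  refine ⟨Real.exp (1 + 2 ^ 40 + 3 * 2 ^ 40), Real.exp_pos _, ?_⟩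
  intro Fq _ _ m t hm ht htm htq
  set q : ℝ := (Fintype.card Fq : ℝ) with hq
  have hq2 : (2:ℝ) ≤ q := one_lt_q
  have hq0 : 0 < q := by linarith
  set v := t / q with hv
  have hv0 : 0 ≤ v := by positivity
  have hv6 : v ≤ 3/5 := by
    by_contra hcon
    push Not at hcon
    have h1 : (3/5:ℝ)^4 < v ^ 4 := pow_lt_pow_left₀ hcon (by norm_num) (by norm_num)
    have h1' : v ^ 4 = t ^ 4 / q ^ 4 := by rw [hv, div_pow]
    have h2 : t ^ 4 / q ^ 4 ≤ 1 / 8 := by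
      rw [div_le_div_iff₀ (by positivity) (by norm_num)]
      have : (2:ℝ)^3 ≤ q ^ 3 := pow_le_pow_left₀ (by norm_num) hq2 3
      nlinarith
    have h3 : (3/5:ℝ)^4 = 81/625 := by norm_num
    linarith
  have key : ∀ p ∈ irrLE Fq m, (1 - v ^ p.natDegree)⁻¹ ≤
      Real.exp (v ^ p.natDegree + 3 * (v ^ p.natDegree) ^ 2) := by
    intro p hp
    have hd : p.natDegree ≠ 0 := (mem_irrLE.1 hp).2.natDegree_pos.ne'
    set f := v ^ p.natDegree with hf
    have hf0 : 0 ≤ f := by positivity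
    have hf6 : f ≤ 3/5 := (pow_le_of_le_one hv0 (by linarith) hd).trans hv6
    have h1 : 1 + (f + 3 * f ^ 2) ≤ Real.exp (f + 3 * f ^ 2) := by
      have := Real.add_one_le_exp (f + 3 * f ^ 2); linarith
    rw [inv_le_iff_one_le_mul₀ (by linarith)]
    have h2 : 1 ≤ (1 + (f + 3 * f ^ 2)) * (1 - f) := by nlinarith [sq_nonneg f]
    exact h2.trans (mul_le_mul_of_nonneg_right h1 (by linarith))
  have hprod : ∏ p ∈ irrLE Fq m, (1 - v ^ p.natDegree)⁻¹ ≤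
      Real.exp (∑ p ∈ irrLE Fq m, (v ^ p.natDegree + 3 * (v ^ p.natDegree) ^ 2)) := by
    rw [Real.exp_sum]
    apply Finset.prod_le_prod _ key
    intro p hp
    have hd : p.natDegree ≠ 0 := (mem_irrLE.1 hp).2.natDegree_pos.ne'
    have hf6 : v ^ p.natDegree ≤ 3/5 := (pow_le_of_le_one hv0 (by linarith) hd).trans hv6
    rw [inv_nonneg]; linarith
  have hm0 : (0:ℝ) < m := by exact_mod_cast hm
  refine hprod.trans ?_
  have hsum : ∑ p ∈ irrLE Fq m, (v ^ p.natDegree + 3 * (v ^ p.natDegree) ^ 2) ≤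
      (1 + 2 ^ 40 + 3 * 2 ^ 40) + Real.log m := by
    refine (sum_irrLE_le m (fun d => v ^ d + 3 * (v ^ d) ^ 2) (fun d => by positivity)).trans ?_
    have hterm : ∀ d ∈ Finset.Icc 1 m, q ^ d / d * (v ^ d + 3 * (v ^ d) ^ 2) ≤
        ((d:ℝ)⁻¹ + 2 ^ 20 * (t - 1)) + (3 * 2 ^ 40) * (1/2) ^ d := by
      intro d hd
      obtain ⟨hd1, hdm⟩ := Finset.mem_Icc.1 hd
      have hd0 : (0:ℝ) < d := by exact_mod_cast hd1
      have hd1' : (1:ℝ) ≤ d := by exact_mod_cast hd1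
      have htd : t ^ d ≤ 2 ^ 20 := by rw [← htm]; exact pow_le_pow_right₀ ht hdm
      have htd1 : 1 ≤ t ^ d := one_le_pow₀ ht
      have e1 : q ^ d / d * (v ^ d + 3 * (v ^ d) ^ 2) = t ^ d / d + 3 * ((t ^ d) ^ 2 / (d * q ^ d)) := by
        rw [hv, div_pow]; field_simp
      rw [e1]
      have e2 : t ^ d / d ≤ (d:ℝ)⁻¹ + 2 ^ 20 * (t - 1) := by
        have := pow_sub_one_le_aux t ht d
        rw [div_le_iff₀ hd0, add_mul, inv_mul_cancel₀ hd0.ne']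
        have h5 : d * t ^ d * (t - 1) ≤ d * 2 ^ 20 * (t - 1) :=
          mul_le_mul_of_nonneg_right (mul_le_mul_of_nonneg_left htd hd0.le) (by linarith)
        nlinarith
      have e3 : (t ^ d) ^ 2 / (d * q ^ d) ≤ 2 ^ 40 * (1/2) ^ d := by
        have h6 : (t ^ d) ^ 2 ≤ 2 ^ 40 := by
          calc (t ^ d) ^ 2 ≤ (2 ^ 20) ^ 2 := pow_le_pow_left₀ (by positivity) htd 2
            _ = 2 ^ 40 := by norm_num
        have h7 : (2:ℝ) ^ d ≤ d * q ^ d := by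
          have : (2:ℝ) ^ d ≤ q ^ d := pow_le_pow_left₀ (by norm_num) hq2 d
          have h8 : 0 < q ^ d := by positivity
          nlinarith
        calc (t ^ d) ^ 2 / (d * q ^ d) ≤ 2 ^ 40 / 2 ^ d :=
              div_le_div₀ (by positivity) h6 (by positivity) h7
          _ = _ := by rw [div_pow, one_pow]; ring
      linarith
    refine (Finset.sum_le_sum hterm).trans ?_
    rw [Finset.sum_add_distrib, Finset.sum_add_distrib,
      ← Finset.mul_sum (Finset.Icc 1 m) (fun d => ((1/2:ℝ)) ^ d)]
    have hH : ∑ d ∈ Finset.Icc 1 m, ((d:ℝ))⁻¹ ≤ 1 + Real.log m := by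
      have := harmonic_le_one_add_log m
      rw [harmonic_eq_sum_Icc] at this
      push_cast at this
      exact this
    have hB : ∑ d ∈ Finset.Icc 1 m, (2 ^ 20 * (t - 1)) ≤ 2 ^ 40 := by
      rw [Finset.sum_const, nsmul_eq_mul, Nat.card_Icc]
      have := one_add_mul_le_pow (show (-2:ℝ) ≤ t - 1 by linarith) m
      rw [show 1 + (t - 1) = t by ring, htm] at this
      push_cast [Nat.add_sub_cancel]
      nlinarith
    have hG : ∑ d ∈ Finset.Icc 1 m, ((1/2:ℝ)) ^ d ≤ 1 := by
      have h9 : ∀ n : ℕ, ∑ d ∈ Finset.Icc 1 n, ((1/2:ℝ)) ^ d = 1 - (1/2)^n := by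
        intro n
        induction n with
        | zero => simp
        | succ n ih => rw [Finset.sum_Icc_succ_top (by omega), ih, pow_succ]; ring
      rw [h9]
      have : (0:ℝ) ≤ (1/2)^m := by positivity
      linarith
    have hG2 := mul_le_mul_of_nonneg_left hG (show (0:ℝ) ≤ 3 * 2 ^ 40 by norm_num)
    refine (add_le_add (add_le_add hH hB) hG2).trans (le_of_eq ?_)
    ring
  calc Real.exp _ ≤ Real.exp ((1 + 2 ^ 40 + 3 * 2 ^ 40) + Real.log m) := Real.exp_le_exp.2 hsum
    _ = _ := by rw [Real.exp_add, Real.exp_log hm0]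

/-- tiny primes -/
noncomputable def tinyIrr (Fq : Type) [Field Fq] [Fintype Fq] : Finset Fq[X] :=
  (irrLE Fq 80).filter (fun p => Fintype.card Fq ^ p.natDegree < 2 ^ 80)

theorem mem_tinyIrr {p : Fq[X]} : p ∈ tinyIrr Fq ↔
    p.Monic ∧ Irreducible p ∧ Fintype.card Fq ^ p.natDegree < 2 ^ 80 := by
  simp only [tinyIrr, Finset.mem_filter, mem_irrLE]
  constructor
  · rintro ⟨⟨⟨h1, h2⟩, h3⟩, h4⟩; exact ⟨h1, h3, h4⟩
  · rintro ⟨h1, h2, h3⟩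
    refine ⟨⟨⟨h1, ?_⟩, h2⟩, h3⟩
    have h4 : 2 ^ p.natDegree ≤ Fintype.card Fq ^ p.natDegree :=
      Nat.pow_le_pow_left Fintype.one_lt_card _
    exact ((Nat.pow_lt_pow_iff_right (by norm_num : 1 < 2)).1 (h4.trans_lt h3)).le

theorem card_tinyIrr : ∃ M : ℕ, ∀ (Fq : Type) [Field Fq] [Fintype Fq], (tinyIrr Fq).card ≤ M := by
  refine ⟨∑ d ∈ Finset.range 81, 2 ^ 80, ?_⟩
  intro Fq _ _
  have hm : ∀ K ∈ tinyIrr Fq, K.natDegree ∈ Finset.range 81 := by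
    intro K hK
    rw [tinyIrr, Finset.mem_filter, mem_irrLE] at hK
    rw [Finset.mem_range]; omega
  rw [Finset.card_eq_sum_card_fiberwise hm]
  apply Finset.sum_le_sum
  intro d _
  by_cases hd : Fintype.card Fq ^ d < 2 ^ 80
  · refine le_trans (Finset.card_le_card ?_) ((card_monEq_le (Fq := Fq) d).trans hd.le)
    intro K hK
    rw [Finset.mem_filter, mem_tinyIrr] at hK
    exact mem_monEq.2 ⟨hK.1.1, hK.2⟩
  · rw [Finset.card_eq_zero.2]
    · exact Nat.zero_le _
    · rw [Finset.filter_eq_empty_iff]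
      intro K hK h
      rw [mem_tinyIrr, h] at hK
      exact hd hK.2.2

theorem prod_tiny_le (κ : ℝ) (hκ0 : 0 ≤ κ) (hκ : κ < 1) : ∃ C : ℝ, 0 < C ∧
    ∀ (Fq : Type) [Field Fq] [Fintype Fq] (v : ℝ), 0 ≤ v → v ≤ κ →
    ∏ p ∈ tinyIrr Fq, (1 - v ^ p.natDegree)⁻¹ ≤ C := by
  obtain ⟨M, hM⟩ := card_tinyIrr
  have hpos : 0 < 1 - κ := by linarith
  have h1 : 1 ≤ (1 - κ)⁻¹ := by rw [one_le_inv₀ hpos]; linarith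
  refine ⟨((1 - κ)⁻¹) ^ M, by positivity, ?_⟩
  intro Fq _ _ v hv hvκ
  calc ∏ p ∈ tinyIrr Fq, (1 - v ^ p.natDegree)⁻¹ ≤ ∏ p ∈ tinyIrr Fq, (1 - κ)⁻¹ := by
        have hle : ∀ p ∈ tinyIrr Fq, v ^ p.natDegree ≤ κ := by
          intro p hp
          have hd : p.natDegree ≠ 0 := (mem_tinyIrr.1 hp).2.1.natDegree_pos.ne'
          exact (pow_le_of_le_one hv (by linarith) hd).trans hvκ
        apply Finset.prod_le_prod
        · intro p hp; have := hle p hp; rw [inv_nonneg]; linarith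
        · intro p hp; have := hle p hp
          exact inv_anti₀ hpos (by linarith)
    _ = ((1 - κ)⁻¹) ^ (tinyIrr Fq).card := by rw [Finset.prod_const]
    _ ≤ _ := pow_le_pow_right₀ h1 (hM Fq)

end FF

section FF
variable {Fq : Type} [Field Fq] [Fintype Fq]

theorem list_prod_monic (l : List Fq[X]) (hl : ∀ p ∈ l, p.Monic ∧ Irreducible p) :
    l.prod.Monic := by
  induction l with
  | nil => simp
  | cons p l ih =>
    rw [List.prod_cons]
    exact (hl p (by simp)).1.mul (ih (fun r hr => hl r (by simp [hr])))

theorem list_len_mul_le (l : List Fq[X]) (hl : ∀ p ∈ l, p.Monic ∧ Irreducible p) (m : ℕ)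
    (hm : ∀ p ∈ l, m ≤ p.natDegree) : l.length * m ≤ l.prod.natDegree := by
  induction l with
  | nil => simp
  | cons p l ih =>
    have h1 := ih (fun r hr => hl r (by simp [hr])) (fun r hr => hm r (by simp [hr]))
    have h2 := hm p (by simp)
    rw [List.prod_cons, (hl p (by simp)).1.natDegree_mul
      (list_prod_monic l (fun r hr => hl r (by simp [hr]))), List.length_cons, add_mul]
    omega

theorem list_two_pow_le (l : List Fq[X]) (hl : ∀ p ∈ l, p.Monic ∧ Irreducible p) (ρ : ℝ)
    (hρ : 0 ≤ ρ)
    (hm : ∀ p ∈ l, 2 ≤ ρ ^ p.natDegree) : (2:ℝ) ^ l.length ≤ ρ ^ l.prod.natDegree := by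
  induction l with
  | nil => simp
  | cons p l ih =>
    have h1 := ih (fun r hr => hl r (by simp [hr])) (fun r hr => hm r (by simp [hr]))
    have h2 := hm p (by simp)
    rw [List.prod_cons, (hl p (by simp)).1.natDegree_mul
      (list_prod_monic l (fun r hr => hl r (by simp [hr]))), List.length_cons, pow_succ, pow_add,
      mul_comm]
    exact mul_le_mul h2 h1 (by positivity) (by positivity)

theorem mem_list_of_dvd (l : List Fq[X]) (hl : ∀ p ∈ l, p.Monic ∧ Irreducible p) (p : Fq[X])
    (hp : p.Monic) (hi : Irreducible p) (hd : p ∣ l.prod) : p ∈ l := by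
  obtain ⟨r, hr, hpr⟩ := (hi.prime.dvd_prod_iff).1 hd
  have h := hl r hr
  rw [eq_of_monic_of_associated hp h.1 (hi.associated_of_dvd h.2 hpr)]
  exact hr

theorem exists_list (N : Fq[X]) (hN : N.Monic) :
    ∃ l : List Fq[X], (∀ p ∈ l, p.Monic ∧ Irreducible p) ∧ l.prod = N := by
  induction hn : N.natDegree using Nat.strong_induction_on generalizing N with
  | _ n ih =>
    by_cases h1 : N = 1
    · exact ⟨[], by simp, by simp [h1]⟩
    · obtain ⟨p, hp, hi, c, rfl⟩ := exists_monic_irreducible_dvd hN h1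
      have hc : c.Monic := hp.of_mul_monic_left hN
      have hlt : c.natDegree < n := by
        rw [← hn, hp.natDegree_mul hc]
        have := hi.natDegree_pos
        omega
      obtain ⟨l, hl, rfl⟩ := ih _ hlt c hc rfl
      refine ⟨p :: l, ?_, by simp⟩
      intro r hr
      rcases List.mem_cons.1 hr with rfl | h
      · exact ⟨hp, hi⟩
      · exact hl r h

theorem exists_sorted_list (N : Fq[X]) (hN : N.Monic) :
    ∃ l : List Fq[X], (∀ p ∈ l, p.Monic ∧ Irreducible p) ∧ l.prod = N ∧
      l.Pairwise (fun a b => a.natDegree ≤ b.natDegree) := by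
  obtain ⟨l, hl, hp⟩ := exists_list N hN
  have hperm := List.mergeSort_perm l (fun a b => decide (a.natDegree ≤ b.natDegree))
  refine ⟨l.mergeSort (fun a b => decide (a.natDegree ≤ b.natDegree)), ?_, ?_, ?_⟩
  · intro p h; exact hl p (hperm.mem_iff.1 h)
  · rw [hperm.prod_eq, hp]
  · have := List.pairwise_mergeSort (le := fun a b : Fq[X] => decide (a.natDegree ≤ b.natDegree))
      (by intro a b c h1 h2; simp at *; omega) (by intro a b; simp; omega) l
    exact this.imp (by intro a b h; simpa using h)

theorem exists_prefix (l : List Fq[X]) (hl : ∀ p ∈ l, p.Monic ∧ Irreducible p) (y : ℕ) :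
    ∃ l₁ l₂ : List Fq[X], l = l₁ ++ l₂ ∧ l₁.prod.natDegree ≤ y ∧
      (l₂ = [] ∨ ∃ p l₃, l₂ = p :: l₃ ∧ y < l₁.prod.natDegree + p.natDegree) := by
  induction l generalizing y with
  | nil => exact ⟨[], [], by simp, by simp, by simp⟩
  | cons p l ih =>
    by_cases h : p.natDegree ≤ y
    · obtain ⟨l₁, l₂, h1, h2, h3⟩ := ih (fun r hr => hl r (by simp [hr])) (y - p.natDegree)
      have hmon : l₁.prod.Monic := list_prod_monic l₁ (fun r hr => hl r (by simp [h1, hr]))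
      have hdeg : (p :: l₁).prod.natDegree = p.natDegree + l₁.prod.natDegree := by
        rw [List.prod_cons, (hl p (by simp)).1.natDegree_mul hmon]
      refine ⟨p :: l₁, l₂, by simp [h1], by rw [hdeg]; omega, ?_⟩
      rcases h3 with h3 | ⟨r, l₃, h3, h4⟩
      · exact Or.inl h3
      · refine Or.inr ⟨r, l₃, h3, ?_⟩
        rw [hdeg]; omega
    · exact ⟨[], p :: l, by simp, by simp, Or.inr ⟨p, l, rfl, by simp; omega⟩⟩

theorem divisor_bound : ∃ C : ℝ, 0 < C ∧ ∀ (Fq : Type) [Field Fq] [Fintype Fq] (ρ : ℝ), 0 ≤ ρ →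
    ρ ^ 10 = (Fintype.card Fq : ℝ) → ∀ N : Fq[X], N.Monic →
    ((mdiv N).card : ℝ) ≤ C * ρ ^ N.natDegree := by
  obtain ⟨C, hC, hCt⟩ := prod_tiny_le (95/100) (by norm_num) (by norm_num)
  refine ⟨C, hC, ?_⟩
  intro Fq _ _ ρ hρ0 hρ N hN
  have hq2 : (2:ℝ) ≤ (Fintype.card Fq : ℝ) := one_lt_q
  have hρ1 : 107/100 ≤ ρ := by
    by_contra hcon
    push Not at hcon
    have h1 := pow_lt_pow_left₀ hcon hρ0 (n := 10) (by norm_num)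
    have h2 : (107/100:ℝ)^10 < 2 := by norm_num
    linarith
  have hρpos : 0 < ρ := by linarith
  have hinv : ρ⁻¹ ≤ 95/100 := by
    rw [inv_le_comm₀ hρpos (by norm_num)]
    refine le_trans ?_ hρ1
    norm_num
  obtain ⟨l, hl, rfl⟩ := exists_list N hN
  set l₁ := l.filter (fun p => p ∈ tinyIrr Fq) with hl1
  set l₂ := l.filter (fun p => !(decide (p ∈ tinyIrr Fq))) with hl2
  have hperm : (l₁ ++ l₂).Perm l := List.filter_append_perm _ l
  have hl₁ : ∀ p ∈ l₁, p.Monic ∧ Irreducible p := fun p hp => hl p (List.mem_of_mem_filter hp)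
  have hl₂ : ∀ p ∈ l₂, p.Monic ∧ Irreducible p := fun p hp => hl p (List.mem_of_mem_filter hp)
  have hprod : l.prod = l₁.prod * l₂.prod := by rw [← hperm.prod_eq, List.prod_append]
  have hm1 := list_prod_monic l₁ hl₁
  have hm2 := list_prod_monic l₂ hl₂
  have h2 : (2:ℝ) ^ l₂.length ≤ ρ ^ l₂.prod.natDegree := by
    apply list_two_pow_le l₂ hl₂ ρ hρ0
    intro p hp
    have hp1 := hl₂ p hp
    have hp2 : p ∉ tinyIrr Fq := by
      have := (List.mem_filter.1 hp).2
      simpa using this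
    have hp3 : 2 ^ 80 ≤ Fintype.card Fq ^ p.natDegree := by
      by_contra hcon
      exact hp2 (mem_tinyIrr.2 ⟨hp1.1, hp1.2, by omega⟩)
    have hp4 : (2:ℝ) ^ 80 ≤ (Fintype.card Fq : ℝ) ^ p.natDegree := by exact_mod_cast hp3
    rw [← hρ, ← pow_mul, mul_comm, pow_mul] at hp4
    by_contra hcon
    push Not at hcon
    have h1 := pow_lt_pow_left₀ hcon (by positivity) (n := 10) (by norm_num)
    have : (2:ℝ)^10 < 2 ^ 80 := by norm_num
    linarith
  have h3 := card_mdiv_mul_list l₂ hl₂ l₁.prod hm1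
  have h4 : ((mdiv l₁.prod).card : ℝ) ≤ C * ρ ^ l₁.prod.natDegree := by
    have hE := euler_le (tinyIrr Fq) (fun p hp => ⟨(mem_tinyIrr.1 hp).1, (mem_tinyIrr.1 hp).2.1⟩)
      l₁.prod.natDegree ρ⁻¹ (by positivity) (by linarith)
    have hE2 := hE.trans (hCt Fq ρ⁻¹ (by positivity) hinv)
    have hsub : mdiv l₁.prod ⊆ smoothSet (tinyIrr Fq) l₁.prod.natDegree := by
      intro D hD
      rw [mem_mdiv hm1.ne_zero] at hD
      rw [mem_smoothSet]
      refine ⟨⟨hD.1, natDegree_le_of_dvd hD.2 hm1.ne_zero⟩, ?_⟩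
      intro p hp hi hpd
      have := mem_list_of_dvd l₁ hl₁ p hp hi (hpd.trans hD.2)
      simpa using (List.mem_filter.1 this).2
    have hE3 : ∑ D ∈ mdiv l₁.prod, ρ⁻¹ ^ D.natDegree ≤ C :=
      (Finset.sum_le_sum_of_subset_of_nonneg hsub (fun _ _ _ => by positivity)).trans hE2
    have hE4 : ((mdiv l₁.prod).card : ℝ) * ρ⁻¹ ^ l₁.prod.natDegree ≤
        ∑ D ∈ mdiv l₁.prod, ρ⁻¹ ^ D.natDegree := by
      rw [← nsmul_eq_mul]
      apply Finset.card_nsmul_le_sum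
      intro D hD
      rw [mem_mdiv hm1.ne_zero] at hD
      exact pow_le_pow_of_le_one (by positivity) (by linarith)
        (natDegree_le_of_dvd hD.2 hm1.ne_zero)
    have hE5 := hE4.trans hE3
    rwa [inv_pow, ← div_eq_mul_inv, div_le_iff₀ (by positivity)] at hE5
  rw [hprod, hm1.natDegree_mul hm2, pow_add]
  calc ((mdiv (l₁.prod * l₂.prod)).card : ℝ) ≤ 2 ^ l₂.length * (mdiv l₁.prod).card := by
        exact_mod_cast h3
    _ ≤ ρ ^ l₂.prod.natDegree * (C * ρ ^ l₁.prod.natDegree) :=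
        mul_le_mul h2 h4 (by positivity) (by positivity)
    _ = _ := by ring

end FF

section FF
variable {Fq : Type} [Field Fq] [Fintype Fq]

/-- cost of a weight -/
noncomputable def costW (y : ℕ) (w : Fq[X] → ℝ) : ℝ :=
  ∑ K ∈ monLE Fq y, w K / (Fintype.card Fq : ℝ) ^ K.natDegree *
    ∑ h ∈ mdiv K, ((Fintype.card Fq : ℝ) ^ h.natDegree)⁻¹

/-- building block weights -/
noncomputable def pieceW (T : Finset Fq[X]) (c t : ℝ) (K : Fq[X]) : ℝ :=
  if K ∈ T then c * t ^ K.natDegree else 0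

theorem pieceW_nonneg (T : Finset Fq[X]) (c t : ℝ) (hc : 0 ≤ c) (ht : 0 ≤ t) (K : Fq[X]) :
    0 ≤ pieceW T c t K := by
  unfold pieceW; split_ifs <;> positivity

theorem costW_piece (T : Finset Fq[X]) (y : ℕ) (hm : ∀ K ∈ T, K.Monic ∧ K.natDegree ≤ y)
    (hT : ∀ h K : Fq[X], h.Monic → h * K ∈ T → K ∈ T) (c t : ℝ) (hc : 0 ≤ c) (ht : 0 ≤ t)
    (B : ℝ) (hv1 : t / (Fintype.card Fq : ℝ) ≤ 3/4)
    (hB : ∑ K ∈ T, (t / (Fintype.card Fq : ℝ)) ^ K.natDegree ≤ B) :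
    costW y (pieceW T c t) ≤ 4 * c * B := by
  have hq2 : (2:ℝ) ≤ (Fintype.card Fq : ℝ) := one_lt_q
  have hv0 : 0 ≤ t / (Fintype.card Fq : ℝ) := by positivity
  have h1 := sum_sigma_le T y hm hT (t / (Fintype.card Fq : ℝ)) hv0 (by linarith)
  have hS : 0 ≤ ∑ K ∈ T, (t / (Fintype.card Fq : ℝ)) ^ K.natDegree :=
    Finset.sum_nonneg (fun _ _ => by positivity)
  have h4 : (1 - t / (Fintype.card Fq : ℝ))⁻¹ ≤ 4 := by
    rw [inv_le_comm₀ (by linarith) (by norm_num)]; linarith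
  have e : costW y (pieceW T c t) = c * ∑ K ∈ T, (t / (Fintype.card Fq : ℝ)) ^ K.natDegree *
      ∑ h ∈ mdiv K, ((Fintype.card Fq : ℝ) ^ h.natDegree)⁻¹ := by
    unfold costW
    rw [Finset.mul_sum]
    symm
    have hsub : T ⊆ monLE Fq y := fun K hK => mem_monLE.2 (hm K hK)
    rw [← Finset.sum_subset hsub (f := fun K => pieceW T c t K / (Fintype.card Fq : ℝ) ^ K.natDegree *
      ∑ h ∈ mdiv K, ((Fintype.card Fq : ℝ) ^ h.natDegree)⁻¹)]
    · apply Finset.sum_congr rfl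
      intro K hK
      rw [pieceW, if_pos hK, div_pow]
      ring
    · intro K _ hK
      rw [pieceW, if_neg hK]; simp
  rw [e]
  calc _ ≤ c * (4 * B) := by
        apply mul_le_mul_of_nonneg_left _ hc
        exact h1.trans (mul_le_mul h4 hB hS (by norm_num))
    _ = _ := by ring

theorem costW_add (y : ℕ) (w₁ w₂ : Fq[X] → ℝ) :
    costW y (fun K => w₁ K + w₂ K) = costW y w₁ + costW y w₂ := by
  unfold costW
  rw [← Finset.sum_add_distrib]
  apply Finset.sum_congr rfl
  intro K _; ring

theorem costW_sum {ι : Type} (S : Finset ι) (y : ℕ) (w : ι → Fq[X] → ℝ) :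
    costW y (fun K => ∑ s ∈ S, w s K) = ∑ s ∈ S, costW y (w s) := by
  unfold costW
  rw [Finset.sum_comm]
  apply Finset.sum_congr rfl
  intro K _
  rw [Finset.sum_div, Finset.sum_mul]

theorem monLE_sum_all (y : ℕ) :
    ∑ K ∈ monLE Fq y, ((1:ℝ) / (Fintype.card Fq : ℝ)) ^ K.natDegree ≤ y + 1 := by
  have hq2 : (2:ℝ) ≤ (Fintype.card Fq : ℝ) := one_lt_q
  refine (sum_monLE_le y (fun d => ((1:ℝ) / (Fintype.card Fq : ℝ)) ^ d)
    (fun d => by positivity)).trans ?_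
  rw [Finset.sum_congr rfl (g := fun _ => (1:ℝ))]
  · simp
  · intro d _
    rw [← mul_pow, mul_one_div_cancel (by positivity), one_pow]

theorem exists_u (m : ℕ) (hm : 1 ≤ m) : ∃ u : ℝ, 1 ≤ u ∧ u ^ m = 2 ^ 10 := by
  refine ⟨((2:ℝ)^10) ^ ((m:ℝ)⁻¹), ?_, ?_⟩
  · exact Real.one_le_rpow (by norm_num) (by positivity)
  · exact Real.rpow_inv_natCast_pow (by norm_num) (by omega)

theorem majorant : ∃ C : ℝ, 0 < C ∧ ∀ (Fq : Type) [Field Fq] [Fintype Fq] (i y : ℕ), i ≤ 5 * y →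
    ∃ w : Fq[X] → ℝ, (∀ K, 0 ≤ w K) ∧
      (∀ N : Fq[X], N.Monic → N.natDegree = i →
        ((mdiv N).card : ℝ) ≤ ∑ K ∈ (monLE Fq y).filter (fun K => K ∣ N), w K) ∧
      costW y w ≤ C * (y + 1) := by
  obtain ⟨Cd, hCd, hdiv⟩ := divisor_bound
  obtain ⟨Ct, hCt, htiny⟩ := prod_tiny_le (3/4) (by norm_num) (by norm_num)
  obtain ⟨Cp, hCp, hdy⟩ := prod_dyadic_le
  choose u hu1 hu2 using fun s : ℕ => exists_u (2 ^ s) Nat.one_le_two_pow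
  refine ⟨4 * 32 + 4 * (Cd * 2 ^ 40) * Ct + 4 * 32 * Cp * 4, by positivity, ?_⟩
  intro Fq _ _ i y hiy
  set q : ℝ := (Fintype.card Fq : ℝ) with hq
  have hq2 : (2:ℝ) ≤ q := one_lt_q
  have hq0 : 0 < q := by linarith
  have hsq : Real.sqrt q ^ 2 = q := Real.sq_sqrt hq0.le
  have hsq0 : 0 < Real.sqrt q := Real.sqrt_pos.2 hq0
  set S := (Finset.range (Nat.log 2 y + 2)).filter (fun s => 2 ^ 80 ≤ Fintype.card Fq ^ (2 ^ s))
    with hS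
  set w0 := pieceW (monLE Fq y) 32 1 with hw0
  set w1 := pieceW (smoothSet (tinyIrr Fq) y) (Cd * 2 ^ 40) (Real.sqrt q) with hw1
  set w2 : ℕ → Fq[X] → ℝ := fun s => pieceW (smoothSet (irrLE Fq (2 ^ s)) y) 32 (u s ^ 2) with hw2
  have hw0n : ∀ K, 0 ≤ w0 K := pieceW_nonneg _ _ _ (by norm_num) (by norm_num)
  have hw1n : ∀ K, 0 ≤ w1 K := pieceW_nonneg _ _ _ (by positivity) (by positivity)
  have hw2n : ∀ s K, 0 ≤ w2 s K := fun s => pieceW_nonneg _ _ _ (by norm_num) (by positivity)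
  have hw2s : ∀ K, 0 ≤ ∑ s ∈ S, w2 s K := fun K => Finset.sum_nonneg (fun s _ => hw2n s K)
  refine ⟨fun K => (w0 K + w1 K) + ∑ s ∈ S, w2 s K, ?_, ?_, ?_⟩
  · intro K
    have := hw0n K; have := hw1n K; have := hw2s K
    simp only
    linarith
  · intro N hN hNi
    obtain ⟨l, hl, rfl, hsort⟩ := exists_sorted_list N hN
    obtain ⟨l₁, l₂, rfl, hdeg, hl2⟩ := exists_prefix l hl y
    have hl₁ : ∀ p ∈ l₁, p.Monic ∧ Irreducible p := fun p hp => hl p (by simp [hp])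
    have hl₂ : ∀ p ∈ l₂, p.Monic ∧ Irreducible p := fun p hp => hl p (by simp [hp])
    have hm1 := list_prod_monic l₁ hl₁
    have hm2 := list_prod_monic l₂ hl₂
    have hcard := card_mdiv_mul_list l₂ hl₂ l₁.prod hm1
    rw [List.prod_append] at hN hNi ⊢
    set K := l₁.prod with hK
    have hcardR : ((mdiv (K * l₂.prod)).card : ℝ) ≤ 2 ^ l₂.length * (mdiv K).card := by
      exact_mod_cast hcard
    have hsubK : mdiv K ⊆ (monLE Fq y).filter (fun D => D ∣ K * l₂.prod) := by
      intro D hD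
      rw [mem_mdiv hm1.ne_zero] at hD
      rw [Finset.mem_filter, mem_monLE]
      exact ⟨⟨hD.1, (natDegree_le_of_dvd hD.2 hm1.ne_zero).trans hdeg⟩, hD.2.mul_right _⟩
    rw [hm1.natDegree_mul hm2] at hNi
    -- few remaining primes
    have few : l₂.length ≤ 5 → ((mdiv (K * l₂.prod)).card : ℝ) ≤
        ∑ K_1 ∈ (monLE Fq y).filter (fun D => D ∣ K * l₂.prod), (w0 K_1 + w1 K_1 + ∑ s ∈ S, w2 s K_1) := by
      intro h5
      refine hcardR.trans ?_
      calc (2:ℝ) ^ l₂.length * (mdiv K).card ≤ 2 ^ 5 * (mdiv K).card :=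
            mul_le_mul_of_nonneg_right (pow_le_pow_right₀ (by norm_num) h5) (by positivity)
        _ = ∑ D ∈ mdiv K, (32:ℝ) := by rw [Finset.sum_const, nsmul_eq_mul]; ring
        _ ≤ ∑ D ∈ mdiv K, (w0 D + w1 D + ∑ s ∈ S, w2 s D) := by
            apply Finset.sum_le_sum
            intro D hD
            have hD2 := Finset.mem_filter.1 (hsubK hD)
            have h6 : w0 D = 32 := by rw [hw0, pieceW, if_pos hD2.1]; simp
            have := hw1n D; have := hw2s D
            linarith
        _ ≤ _ := by
            apply Finset.sum_le_sum_of_subset_of_nonneg hsubK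
            intro D _ _
            have := hw0n D; have := hw1n D; have := hw2s D
            linarith
    rcases hl2 with h0 | ⟨p, l₃, h3, h4⟩
    · exact few (by simp [h0])
    · set m := p.natDegree with hm
      have hpl : p ∈ l₂ := by simp [h3]
      have hm1' : 1 ≤ m := (hl₂ p hpl).2.natDegree_pos
      rw [List.pairwise_append] at hsort
      have hbig : ∀ r ∈ l₂, m ≤ r.natDegree := by
        intro r hr
        have h5 := hsort.2.1
        rw [h3, List.pairwise_cons] at h5
        rw [h3] at hr
        rcases List.mem_cons.1 hr with rfl | h
        · exact le_refl _
        · exact h5.1 r h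
      have hsmall : ∀ r ∈ l₁, r.natDegree ≤ m := fun r hr => hsort.2.2 r hr p hpl
      have hlen := list_len_mul_le l₂ hl₂ m hbig
      by_cases hmy : y ≤ m
      · apply few
        by_contra hcon
        push Not at hcon
        have h6 : 6 * m ≤ l₂.length * m := Nat.mul_le_mul_right _ hcon
        omega
      push Not at hmy
      by_cases htn : Fintype.card Fq ^ m < 2 ^ 80
      · -- tiny case
        have hKs : K ∈ smoothSet (tinyIrr Fq) y := by
          rw [mem_smoothSet]
          refine ⟨⟨hm1, hdeg⟩, ?_⟩
          intro r hr hi hrd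
          have h5 := mem_list_of_dvd l₁ hl₁ r hr hi hrd
          rw [mem_tinyIrr]
          refine ⟨hr, hi, lt_of_le_of_lt ?_ htn⟩
          exact Nat.pow_le_pow_right Fintype.card_pos (hsmall r h5)
        have hρ : (q ^ ((10:ℕ):ℝ)⁻¹) ^ 10 = q := Real.rpow_inv_natCast_pow hq0.le (by norm_num)
        set ρ := q ^ ((10:ℕ):ℝ)⁻¹ with hρd
        have hρ0 : 0 ≤ ρ := Real.rpow_nonneg hq0.le _
        have hρ1 : 1 ≤ ρ := Real.one_le_rpow (by linarith) (by positivity)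
        have h5 := hdiv Fq ρ hρ0 hρ (K * l₂.prod) hN
        have h6 : ρ ^ (K * l₂.prod).natDegree ≤ 2 ^ 40 * Real.sqrt q ^ K.natDegree := by
          rw [hm1.natDegree_mul hm2, hNi]
          have h7 : ρ ^ 5 = Real.sqrt q := by
            have : (ρ ^ 5) ^ 2 = q := by rw [← pow_mul]; exact hρ
            rw [← this, Real.sqrt_sq (by positivity)]
          have hs1 : 1 ≤ Real.sqrt q := by rw [← h7]; exact one_le_pow₀ hρ1
          have h8 : Real.sqrt q ^ m ≤ 2 ^ 40 := by
            have h9 : (Real.sqrt q ^ m) ^ 2 ≤ (2 ^ 40) ^ 2 := by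
              rw [← pow_mul, mul_comm m 2, pow_mul, hsq, ← pow_mul]
              have : (Fintype.card Fq : ℝ) ^ m < 2 ^ 80 := by exact_mod_cast htn
              exact this.le
            exact le_of_sq_le_sq h9 (by positivity)
          calc ρ ^ i ≤ ρ ^ (5 * y) := pow_le_pow_right₀ hρ1 hiy
            _ = Real.sqrt q ^ y := by rw [pow_mul, h7]
            _ ≤ Real.sqrt q ^ (m + K.natDegree) := pow_le_pow_right₀ hs1 (by omega)
            _ = Real.sqrt q ^ m * Real.sqrt q ^ K.natDegree := pow_add _ _ _
            _ ≤ _ := mul_le_mul_of_nonneg_right h8 (by positivity)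
        have h7 : ((mdiv (K * l₂.prod)).card : ℝ) ≤ w1 K := by
          rw [hw1, pieceW, if_pos hKs]
          refine h5.trans ?_
          rw [mul_assoc]
          exact mul_le_mul_of_nonneg_left h6 hCd.le
        refine h7.trans ?_
        have hKm : K ∈ (monLE Fq y).filter (fun D => D ∣ K * l₂.prod) :=
          hsubK ((mem_mdiv hm1.ne_zero).2 ⟨hm1, dvd_refl _⟩)
        refine le_trans ?_ (Finset.single_le_sum
          (f := fun D => (w0 D + w1 D) + ∑ s ∈ S, w2 s D) ?_ hKm)
        · have := hw0n K; have := hw2s K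
          linarith
        · intro D _
          have := hw0n D; have := hw1n D; have := hw2s D
          linarith
      · -- dyadic case
        push Not at htn
        set s := Nat.clog 2 m with hs
        have hs1 : m ≤ 2 ^ s := Nat.le_pow_clog (by norm_num) m
        have hs2 : 2 ^ s < 2 * m := by
          rcases Nat.eq_or_lt_of_le hm1' with h | h
          · rw [hs, ← h]; simp
          · have h5 := Nat.pow_pred_clog_lt_self (b := 2) (by norm_num) (x := m) (by omega)
            have h6 : 0 < Nat.clog 2 m := Nat.clog_pos (by norm_num) (by omega)
            rw [← hs] at h5 h6
            obtain ⟨k, hk⟩ : ∃ k, s = k + 1 := ⟨s - 1, by omega⟩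
            rw [hk] at h5 ⊢
            simp at h5
            rw [pow_succ]; omega
        have hsS : s ∈ S := by
          rw [hS, Finset.mem_filter, Finset.mem_range]
          constructor
          · have h5 : y < 2 ^ (Nat.log 2 y + 1) := Nat.lt_pow_succ_log_self (by norm_num) y
            have h6 : 2 ^ s < 2 ^ (Nat.log 2 y + 2) := by
              rw [pow_succ 2 (Nat.log 2 y + 1)]; omega
            exact (Nat.pow_lt_pow_iff_right (by norm_num)).1 h6
          · exact htn.trans (Nat.pow_le_pow_right Fintype.card_pos hs1)
        have hu0 : 0 ≤ u s := by linarith [hu1 s]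
        have hlen2 : (2:ℝ) ^ l₂.length ≤ 2 ^ 5 * u s ^ K.natDegree := by
          have h5 : ((2:ℝ) ^ l₂.length) ^ (2 ^ s) ≤ (2 ^ 5 * u s ^ K.natDegree) ^ (2 ^ s) := by
            rw [mul_pow, ← pow_mul (u s), mul_comm K.natDegree, pow_mul (u s), hu2, ← pow_mul, ← pow_mul,
              ← pow_mul, ← pow_add]
            apply pow_le_pow_right₀ (by norm_num)
            by_cases h6 : l₂.length ≤ 5
            · have := Nat.mul_le_mul_right (2 ^ s) h6
              omega
            · push Not at h6
              obtain ⟨k, hk⟩ : ∃ k, l₂.length = k + 5 := ⟨l₂.length - 5, by omega⟩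
              rw [hk] at hlen ⊢
              have h7 : k * 2 ^ s ≤ k * (2 * m) := Nat.mul_le_mul_left _ hs2.le
              have h8 : (k + 5) * m = k * m + 5 * m := by ring
              have h9 : k * (2 * m) = 2 * (k * m) := by ring
              have h10 : (k + 5) * 2 ^ s = k * 2 ^ s + 5 * 2 ^ s := by ring
              omega
          exact le_of_pow_le_pow_left₀ (by positivity) (by positivity) h5
        have hpair := pair_le hm1 (u s) hu0
        refine hcardR.trans ?_
        calc (2:ℝ) ^ l₂.length * (mdiv K).card ≤ (2 ^ 5 * u s ^ K.natDegree) * (mdiv K).card :=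
              mul_le_mul_of_nonneg_right hlen2 (by positivity)
          _ = 32 * ((mdiv K).card * u s ^ K.natDegree) := by ring
          _ ≤ 32 * ∑ D ∈ mdiv K, (u s ^ 2) ^ D.natDegree :=
              mul_le_mul_of_nonneg_left hpair (by norm_num)
          _ = ∑ D ∈ mdiv K, w2 s D := by
              rw [Finset.mul_sum]
              apply Finset.sum_congr rfl
              intro D hD
              have hD1 := (mem_mdiv hm1.ne_zero).1 hD
              have : D ∈ smoothSet (irrLE Fq (2 ^ s)) y := by
                rw [mem_smoothSet]
                refine ⟨⟨hD1.1, (natDegree_le_of_dvd hD1.2 hm1.ne_zero).trans hdeg⟩, ?_⟩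
                intro r hr hi hrd
                have h5 := mem_list_of_dvd l₁ hl₁ r hr hi (hrd.trans hD1.2)
                exact mem_irrLE.2 ⟨⟨hr, (hsmall r h5).trans hs1⟩, hi⟩
              rw [hw2]
              simp only [pieceW]
              rw [if_pos this]
          _ ≤ ∑ D ∈ mdiv K, (w0 D + w1 D + ∑ s ∈ S, w2 s D) := by
              apply Finset.sum_le_sum
              intro D _
              have h5 := Finset.single_le_sum (f := fun s => w2 s D) (fun s _ => hw2n s D) hsS
              have := hw0n D; have := hw1n D
              linarith
          _ ≤ _ := by
              apply Finset.sum_le_sum_of_subset_of_nonneg hsubK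
              intro D _ _
              have := hw0n D; have := hw1n D; have := hw2s D
              linarith
  · rw [costW_add, costW_add, costW_sum]
    have hy1 : (1:ℝ) ≤ (y:ℝ) + 1 := by have : (0:ℝ) ≤ y := by positivity
                                       linarith
    have c0 : costW y w0 ≤ 4 * 32 * (y + 1) := by
      apply costW_piece (monLE Fq y) y (fun K hK => mem_monLE.1 hK) _ 32 1 (by norm_num) (by norm_num)
      · rw [div_le_iff₀ hq0]; linarith
      · exact monLE_sum_all y
      · intro h K hh hK
        rw [mem_monLE] at hK ⊢
        have hKm : K.Monic := hh.of_mul_monic_left hK.1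
        rw [hh.natDegree_mul hKm] at hK
        exact ⟨hKm, by omega⟩
    have c1 : costW y w1 ≤ 4 * (Cd * 2 ^ 40) * Ct := by
      have hv : Real.sqrt q / q ≤ 3 / 4 := by
        rw [div_le_iff₀ hq0]
        have : (4/3:ℝ) ≤ Real.sqrt q := Real.le_sqrt_of_sq_le (by linarith)
        nlinarith
      apply costW_piece (smoothSet (tinyIrr Fq) y) y (fun K hK => (mem_smoothSet.1 hK).1)
        (fun h K hh hK => smoothSet_of_mul hh hK) (Cd * 2 ^ 40) (Real.sqrt q) (by positivity)
        (by positivity) Ct hv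
      refine (euler_le (tinyIrr Fq) (fun p hp => ⟨(mem_tinyIrr.1 hp).1, (mem_tinyIrr.1 hp).2.1⟩)
        y _ (by positivity) (lt_of_le_of_lt hv (by norm_num))).trans ?_
      exact htiny Fq _ (by positivity) hv
    have c2 : ∀ s ∈ S, costW y (w2 s) ≤ 4 * 32 * (Cp * ((2 ^ s : ℕ) : ℝ)) := by
      intro s hs
      have hs2 : 2 ^ 80 ≤ Fintype.card Fq ^ (2 ^ s) := (Finset.mem_filter.1 hs).2
      have hu0 : 0 ≤ u s := by linarith [hu1 s]
      have ht1 : 1 ≤ u s ^ 2 := one_le_pow₀ (hu1 s)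
      have htm : (u s ^ 2) ^ (2 ^ s) = 2 ^ 20 := by
        rw [← pow_mul, mul_comm, pow_mul, hu2]; norm_num
      have ht4 : (u s ^ 2) ^ 4 ≤ q := by
        have h5 : ((u s ^ 2) ^ 4) ^ (2 ^ s) ≤ q ^ (2 ^ s) := by
          have hs3 : (2:ℝ)^(20*4) ≤ q ^ (2^s) := by rw [hq]; exact_mod_cast hs2
          rw [← pow_mul, mul_comm, pow_mul, htm, ← pow_mul]
          exact hs3
        exact le_of_pow_le_pow_left₀ (by positivity) hq0.le h5
      have hv : u s ^ 2 / q ≤ 3 / 4 := by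
        rw [div_le_iff₀ hq0]
        by_contra hcon
        push Not at hcon
        have h5 := pow_lt_pow_left₀ hcon (by positivity) (n := 4) (by norm_num)
        have h6 : (2:ℝ)^3 ≤ q ^ 3 := pow_le_pow_left₀ (by norm_num) hq2 3
        rw [mul_pow] at h5
        have h7 : q ^ 4 = q ^ 3 * q := by ring
        rw [h7] at h5
        norm_num at h5 h6
        nlinarith
      apply costW_piece (smoothSet (irrLE Fq (2 ^ s)) y) y (fun K hK => (mem_smoothSet.1 hK).1)
        (fun h K hh hK => smoothSet_of_mul hh hK) 32 (u s ^ 2) (by norm_num)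
        (by positivity) _ hv
      refine (euler_le (irrLE Fq (2 ^ s)) (fun p hp => ⟨(mem_irrLE.1 hp).1.1, (mem_irrLE.1 hp).2⟩)
        y _ (by positivity) (lt_of_le_of_lt hv (by norm_num))).trans ?_
      exact hdy Fq (2 ^ s) (u s ^ 2) Nat.one_le_two_pow ht1 htm ht4
    have c3 : ∑ s ∈ S, costW y (w2 s) ≤ 4 * 32 * Cp * (4 * (y + 1)) := by
      refine (Finset.sum_le_sum c2).trans ?_
      have h5 : ∑ s ∈ S, 2 ^ s ≤ 4 * (y + 1) := by
        have h6 : ∑ s ∈ S, 2 ^ s ≤ ∑ s ∈ Finset.range (Nat.log 2 y + 2), 2 ^ s :=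
          Finset.sum_le_sum_of_subset (Finset.filter_subset _ _)
        have h7 := Nat.geomSum_eq (le_refl 2) (Nat.log 2 y + 2)
        have h8 : 2 ^ Nat.log 2 y ≤ y + 1 := by
          rcases Nat.eq_zero_or_pos y with h | h
          · simp [h]
          · exact (Nat.pow_log_le_self 2 (by omega)).trans (by omega)
        have h9 : 2 ^ (Nat.log 2 y + 2) = 4 * 2 ^ (Nat.log 2 y) := by ring
        simp at h7
        omega
      have h6 : ∑ s ∈ S, ((2 ^ s : ℕ) : ℝ) ≤ 4 * (y + 1) := by exact_mod_cast h5
      rw [← Finset.mul_sum, ← Finset.mul_sum]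
      have h10 : 0 ≤ 4 * 32 * Cp := by positivity
      calc _ = 4 * 32 * Cp * ∑ s ∈ S, ((2 ^ s : ℕ) : ℝ) := by ring
        _ ≤ _ := mul_le_mul_of_nonneg_left h6 h10
    have c1' : 4 * (Cd * 2 ^ 40) * Ct ≤ 4 * (Cd * 2 ^ 40) * Ct * (y + 1) :=
      le_mul_of_one_le_right (by positivity) hy1
    refine (add_le_add (add_le_add c0 (c1.trans c1')) c3).trans (le_of_eq ?_)
    ring

end FF

section FF
variable {Fq : Type} [Field Fq] [Fintype Fq]

/-- quadruples with prescribed degrees -/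
noncomputable def quad (F : Fq[X]) (a : Fq) (α β γ δ : ℕ) :
    Finset (Fq[X] × Fq[X] × Fq[X] × Fq[X]) :=
  (monEq Fq α ×ˢ monEq Fq β ×ˢ monEq Fq γ ×ˢ monEq Fq δ).filter (fun t =>
    IsCoprime (t.1 * t.2.1 * t.2.2.1 * t.2.2.2) F ∧
    F ∣ (t.1 * t.2.2.1 - Polynomial.C a * (t.2.1 * t.2.2.2)) ∧
    t.1 * t.2.2.1 ≠ t.2.1 * t.2.2.2)

theorem mem_quad {F : Fq[X]} {a : Fq} {α β γ δ : ℕ} {A B C D : Fq[X]} :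
    (A, B, C, D) ∈ quad F a α β γ δ ↔
      (A ∈ monEq Fq α ∧ B ∈ monEq Fq β ∧ C ∈ monEq Fq γ ∧ D ∈ monEq Fq δ) ∧
      IsCoprime (A * B * C * D) F ∧ F ∣ (A * C - Polynomial.C a * (B * D)) ∧ A * C ≠ B * D := by
  simp only [quad, Finset.mem_filter, Finset.mem_product]

theorem mul_mem_monEq {m n : ℕ} {A B : Fq[X]} (hA : A ∈ monEq Fq m) (hB : B ∈ monEq Fq n) :
    A * B ∈ monEq Fq (m + n) := by
  rw [mem_monEq] at *
  exact ⟨hA.1.mul hB.1, by rw [hA.1.natDegree_mul hB.1, hA.2, hB.2]⟩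

theorem quad_swap1 (F : Fq[X]) (a : Fq) (ha : a ≠ 0) (α β γ δ : ℕ) :
    (quad F a α β γ δ).card ≤ (quad F a⁻¹ β α δ γ).card := by
  refine Finset.card_le_card_of_injOn (fun t => (t.2.1, t.1, t.2.2.2, t.2.2.1)) ?_ ?_
  · rintro ⟨A, B, C, D⟩ h
    simp only [Finset.mem_coe, mem_quad] at h ⊢
    obtain ⟨⟨h1, h2, h3, h4⟩, h5, h6, h7⟩ := h
    refine ⟨⟨h2, h1, h4, h3⟩, ?_, ?_, h7.symm⟩
    · rwa [show B * A * D * C = A * B * C * D by ring]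
    · have e : B * D - Polynomial.C a⁻¹ * (A * C)
          = (-Polynomial.C a⁻¹) * (A * C - Polynomial.C a * (B * D)) := by
        have : Polynomial.C a⁻¹ * Polynomial.C a = 1 := by
          rw [← Polynomial.C_mul, inv_mul_cancel₀ ha, Polynomial.C_1]
        linear_combination (-(B * D)) * this
      rw [e]
      exact Dvd.dvd.mul_left h6 _
  · rintro ⟨A, B, C, D⟩ _ ⟨A', B', C', D'⟩ _ h
    simp only [Prod.mk.injEq] at h ⊢
    tauto

theorem quad_swap2 (F : Fq[X]) (a : Fq) (α β γ δ : ℕ) :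
    (quad F a α β γ δ).card ≤ (quad F a γ δ α β).card := by
  refine Finset.card_le_card_of_injOn (fun t => (t.2.2.1, t.2.2.2, t.1, t.2.1)) ?_ ?_
  · rintro ⟨A, B, C, D⟩ h
    simp only [Finset.mem_coe, mem_quad] at h ⊢
    obtain ⟨⟨h1, h2, h3, h4⟩, h5, h6, h7⟩ := h
    refine ⟨⟨h3, h4, h1, h2⟩, ?_, ?_, ?_⟩
    · rwa [show C * D * A * B = A * B * C * D by ring]
    · rwa [mul_comm C A, mul_comm D B]
    · rwa [mul_comm C A, mul_comm D B]
  · rintro ⟨A, B, C, D⟩ _ ⟨A', B', C', D'⟩ _ h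
    simp only [Prod.mk.injEq] at h ⊢
    tauto

theorem one_le_sigma (K : Fq[X]) (hK : K ≠ 0) :
    (1:ℝ) ≤ ∑ h ∈ mdiv K, ((Fintype.card Fq : ℝ) ^ h.natDegree)⁻¹ := by
  have h1 : (1 : Fq[X]) ∈ mdiv K := (mem_mdiv hK).2 ⟨monic_one, one_dvd _⟩
  have := Finset.single_le_sum (f := fun h : Fq[X] => ((Fintype.card Fq : ℝ) ^ h.natDegree)⁻¹)
    (fun h _ => by positivity) h1
  simpa using this

/-- swapping the sums in the majorant -/
theorem sum_majorant_le {ι : Type} (U : Finset ι) (N : ι → Fq[X]) (y : ℕ) (w : Fq[X] → ℝ)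
    (hw : ∀ K, 0 ≤ w K) (M : ℝ)
    (hmaj : ∀ x ∈ U, ((mdiv (N x)).card : ℝ) ≤ ∑ K ∈ (monLE Fq y).filter (fun K => K ∣ N x), w K)
    (hcount : ∀ K ∈ monLE Fq y, ((U.filter (fun x => K ∣ N x)).card : ℝ) ≤
      M * (((Fintype.card Fq : ℝ) ^ K.natDegree)⁻¹ *
        ∑ h ∈ mdiv K, ((Fintype.card Fq : ℝ) ^ h.natDegree)⁻¹)) :
    ∑ x ∈ U, ((mdiv (N x)).card : ℝ) ≤ M * costW y w := by
  refine (Finset.sum_le_sum hmaj).trans ?_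
  have e : ∑ x ∈ U, ∑ K ∈ (monLE Fq y).filter (fun K => K ∣ N x), w K
      = ∑ K ∈ monLE Fq y, w K * ((U.filter (fun x => K ∣ N x)).card : ℝ) := by
    simp only [Finset.sum_filter]
    rw [Finset.sum_comm]
    apply Finset.sum_congr rfl
    intro K _
    rw [← Finset.sum_filter, Finset.sum_const, nsmul_eq_mul, mul_comm]
  rw [e, costW, Finset.mul_sum]
  apply Finset.sum_le_sum
  intro K hK
  refine (mul_le_mul_of_nonneg_left (hcount K hK) (hw K)).trans (le_of_eq ?_)
  rw [div_eq_mul_inv]; ring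

theorem caseX (F : Fq[X]) (hF : F.Monic) (a : Fq) (α β γ δ y : ℕ)
    (hy : y + F.natDegree ≤ α + γ) (w : Fq[X] → ℝ) (hw : ∀ K, 0 ≤ w K)
    (hmaj : ∀ N : Fq[X], N.Monic → N.natDegree = α + γ →
        ((mdiv N).card : ℝ) ≤ ∑ K ∈ (monLE Fq y).filter (fun K => K ∣ N), w K) :
    ((quad F a α β γ δ).card : ℝ) ≤
      (Fintype.card Fq : ℝ) ^ (α + β + γ + δ) / (Fintype.card Fq : ℝ) ^ F.natDegree
        * costW y w := by
  have hq2 : (2:ℝ) ≤ (Fintype.card Fq : ℝ) := one_lt_q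
  set q : ℝ := (Fintype.card Fq : ℝ) with hq
  have hq0 : 0 < q := by linarith
  let S : Fq[X] × Fq[X] → Finset Fq[X] := fun bd =>
    (monEq Fq (α + γ)).filter (fun N => IsCoprime N F ∧ F ∣ N - Polynomial.C a * (bd.1 * bd.2))
  let T := (monEq Fq β ×ˢ monEq Fq δ).sigma (fun bd => (S bd).sigma (fun N => mdiv N))
  have h1 : (quad F a α β γ δ).card ≤ T.card := by
    refine Finset.card_le_card_of_injOn (fun t => ⟨(t.2.1, t.2.2.2), ⟨t.1 * t.2.2.1, t.1⟩⟩) ?_ ?_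
    · rintro ⟨A, B, C, D⟩ h
      simp only [Finset.mem_coe, mem_quad] at h
      obtain ⟨⟨h1, h2, h3, h4⟩, h5, h6, h7⟩ := h
      have hm := mul_mem_monEq h1 h3
      simp only [T, S, Finset.mem_coe, Finset.mem_sigma, Finset.mem_product, Finset.mem_filter]
      refine ⟨⟨h2, h4⟩, ⟨hm, ?_, h6⟩, ?_⟩
      · apply IsCoprime.of_mul_left_left (y := B * D)
        rwa [show A * C * (B * D) = A * B * C * D by ring]
      · exact (mem_mdiv (mem_monEq.1 hm).1.ne_zero).2 ⟨(mem_monEq.1 h1).1, dvd_mul_right _ _⟩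
    · rintro ⟨A, B, C, D⟩ h ⟨A', B', C', D'⟩ _ h'
      simp only [Finset.mem_coe, mem_quad] at h
      have hA := (mem_monEq.1 h.1.1).1.ne_zero
      simp only [Sigma.mk.injEq, Prod.mk.injEq, heq_eq_eq] at h' ⊢
      obtain ⟨⟨rfl, rfl⟩, h8, rfl⟩ := h'
      exact ⟨rfl, rfl, mul_left_cancel₀ hA h8, rfl⟩
  have h2 : ∀ bd ∈ monEq Fq β ×ˢ monEq Fq δ,
      ∑ N ∈ S bd, ((mdiv N).card : ℝ) ≤ q ^ (α + γ) / q ^ F.natDegree * costW y w := by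
    intro bd _
    apply sum_majorant_le (S bd) (fun N => N) y w hw
    · intro N hN
      have := mem_monEq.1 (Finset.mem_filter.1 hN).1
      exact hmaj N this.1 this.2
    · intro K hK
      rw [mem_monLE] at hK
      have h3 : ((S bd).filter (fun N => K ∣ N)).card ≤
          Fintype.card Fq ^ (α + γ - (K * F).natDegree) := by
        apply card_le_of_diff _ _ (hK.1.mul hF)
        · rw [hK.1.natDegree_mul hF]; omega
        · intro N hN N' hN'
          simp only [S, Finset.mem_filter] at hN hN'
          refine ⟨?_, degree_sub_lt_of_monic hN.1.1 hN'.1.1⟩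
          have hco : IsCoprime K F := by
            obtain ⟨c, hc⟩ := hN.2
            have := hN.1.2.1
            rw [hc] at this
            exact this.of_mul_left_left
          apply hco.mul_dvd (dvd_sub hN.2 hN'.2)
          have := dvd_sub hN.1.2.2 hN'.1.2.2
          rwa [sub_sub_sub_cancel_right] at this
      have h4 : (((S bd).filter (fun N => K ∣ N)).card : ℝ) ≤
          q ^ (α + γ - (K * F).natDegree) := by rw [hq]; exact_mod_cast h3
      refine h4.trans ?_
      have h5 : q ^ (α + γ - (K * F).natDegree) =
          q ^ (α + γ) / q ^ F.natDegree * (q ^ K.natDegree)⁻¹ := by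
        rw [hK.1.natDegree_mul hF, pow_sub₀ _ hq0.ne' (by omega), pow_add]
        field_simp
        ring
      rw [h5, ← mul_assoc]
      exact le_mul_of_one_le_right (by positivity) (one_le_sigma K hK.1.ne_zero)
  have hc0 : 0 ≤ costW y w := by
    unfold costW
    exact Finset.sum_nonneg (fun K _ => mul_nonneg (div_nonneg (hw K) (by positivity))
      (Finset.sum_nonneg (fun _ _ => by positivity)))
  calc ((quad F a α β γ δ).card : ℝ) ≤ T.card := by exact_mod_cast h1
    _ = ∑ bd ∈ monEq Fq β ×ˢ monEq Fq δ, ∑ N ∈ S bd, ((mdiv N).card : ℝ) := by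
        simp only [T, Finset.card_sigma]; push_cast; rfl
    _ ≤ ∑ bd ∈ monEq Fq β ×ˢ monEq Fq δ, q ^ (α + γ) / q ^ F.natDegree * costW y w :=
        Finset.sum_le_sum h2
    _ = ((monEq Fq β).card : ℝ) * (monEq Fq δ).card * (q ^ (α + γ) / q ^ F.natDegree * costW y w) := by
        rw [Finset.sum_const, nsmul_eq_mul, Finset.card_product]; push_cast; rfl
    _ ≤ q ^ β * q ^ δ * (q ^ (α + γ) / q ^ F.natDegree * costW y w) := by
        have hb : ((monEq Fq β).card : ℝ) ≤ q ^ β := by rw [hq]; exact_mod_cast card_monEq_le β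
        have hd : ((monEq Fq δ).card : ℝ) ≤ q ^ δ := by rw [hq]; exact_mod_cast card_monEq_le δ
        gcongr
    _ = _ := by rw [show α + β + γ + δ = β + δ + (α + γ) by ring, pow_add, pow_add]; ring

end FF

section FF
variable {Fq : Type} [Field Fq] [Fintype Fq]

/-- properties of the triples `(D, L, B)` -/
structure GoodT (F : Fq[X]) (a : Fq) (i β δ : ℕ) (x : Fq[X] × Fq[X] × Fq[X]) : Prop where
  hD : x.1 ∈ monEq Fq δ
  hB : x.2.2 ∈ monEq Fq β
  hco : IsCoprime x.1 F
  hL : x.2.1 ≠ 0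
  hN : x.2.1 * F + Polynomial.C a * (x.2.2 * x.1) ∈ monEq Fq i

theorem GoodT.diff {F : Fq[X]} (hF : F.Monic) {a : Fq} {i β δ : ℕ} {x x' : Fq[X] × Fq[X] × Fq[X]}
    (h : GoodT F a i β δ x) (h' : GoodT F a i β δ x') (hi : β + δ ≤ i) (hf : F.natDegree ≤ i) :
    (x.2.1 - x'.2.1).degree < ((i - F.natDegree : ℕ) : WithBot ℕ) := by
  by_cases h0 : x.2.1 - x'.2.1 = 0
  · rw [h0, degree_zero]; exact WithBot.bot_lt_coe _
  have h1 := degree_sub_lt_of_monic h.hN h'.hN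
  have h2 := degree_sub_lt_of_monic (mul_mem_monEq h.hB h.hD) (mul_mem_monEq h'.hB h'.hD)
  have h3 : (Polynomial.C a * (x.2.2 * x.1 - x'.2.2 * x'.1)).degree < (i : WithBot ℕ) := by
    rw [Polynomial.C_mul']
    refine lt_of_le_of_lt (degree_smul_le _ _) (lt_of_lt_of_le h2 ?_)
    exact_mod_cast hi
  have e : (x.2.1 - x'.2.1) * F = (x.2.1 * F + Polynomial.C a * (x.2.2 * x.1) -
      (x'.2.1 * F + Polynomial.C a * (x'.2.2 * x'.1)))
      - Polynomial.C a * (x.2.2 * x.1 - x'.2.2 * x'.1) := by ring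
  have h4 : ((x.2.1 - x'.2.1) * F).degree < (i : WithBot ℕ) := by
    rw [e]
    exact lt_of_le_of_lt (degree_sub_le _ _) (max_lt h1 h3)
  rw [degree_mul, degree_eq_natDegree h0, degree_eq_natDegree hF.ne_zero] at h4
  rw [degree_eq_natDegree h0]
  norm_cast at h4 ⊢
  omega

theorem GoodT.deg {F : Fq[X]} (hF : F.Monic) {a : Fq} {i β δ : ℕ} {x : Fq[X] × Fq[X] × Fq[X]}
    (h : GoodT F a i β δ x) (hi : β + δ ≤ i) :
    x.2.1.natDegree + F.natDegree ≤ i := by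
  have h1 := (mem_monEq.1 h.hN).2
  have h2 := (mem_monEq.1 (mul_mem_monEq h.hB h.hD)).2
  have e : x.2.1 * F = (x.2.1 * F + Polynomial.C a * (x.2.2 * x.1))
      - Polynomial.C a * (x.2.2 * x.1) := by ring
  rw [← natDegree_mul h.hL hF.ne_zero, e]
  refine (natDegree_sub_le _ _).trans (max_le h1.le ?_)
  exact (natDegree_C_mul_le _ _).trans (by omega)

theorem countY (F : Fq[X]) (hF : F.Monic) (a : Fq) (ha : a ≠ 0) (i β δ : ℕ) (hi : β + δ ≤ i)
    (U : Finset (Fq[X] × Fq[X] × Fq[X])) (hU : ∀ x ∈ U, GoodT F a i β δ x)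
    (K h : Fq[X]) (hK : K.Monic) (hKβ : K.natDegree ≤ β) (hh : h.Monic)
    (hUK : ∀ x ∈ U, K ∣ x.2.1 * F + Polynomial.C a * (x.2.2 * x.1))
    (hUh : ∀ x ∈ U, normalize (EuclideanDomain.gcd K x.1) = h) :
    (U.card : ℝ) ≤ (Fintype.card Fq : ℝ) ^ (β + δ + i) / (Fintype.card Fq : ℝ) ^ F.natDegree
      * (((Fintype.card Fq : ℝ) ^ K.natDegree)⁻¹ * ((Fintype.card Fq : ℝ) ^ h.natDegree)⁻¹) := by
  have hq2 : (2:ℝ) ≤ (Fintype.card Fq : ℝ) := one_lt_q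
  have hq0 : 0 < (Fintype.card Fq : ℝ) := by linarith
  rcases U.eq_empty_or_nonempty with rfl | ⟨x0, hx0⟩
  · simp only [Finset.card_empty, Nat.cast_zero]; positivity
  have hdvd : ∀ x ∈ U, h ∣ K ∧ h ∣ x.1 ∧ h ∣ x.2.1 := by
    intro x hx
    have g := hU x hx
    have h1 : h ∣ K := by
      rw [← hUh x hx, normalize_dvd_iff]; exact EuclideanDomain.gcd_dvd_left _ _
    have h2 : h ∣ x.1 := by
      rw [← hUh x hx, normalize_dvd_iff]; exact EuclideanDomain.gcd_dvd_right _ _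
    refine ⟨h1, h2, ?_⟩
    have h3 : IsCoprime h F := by
      obtain ⟨c, hc⟩ := h2
      have := g.hco
      rw [hc] at this
      exact this.of_mul_left_left
    apply h3.dvd_of_dvd_mul_right
    have h4 := dvd_sub (h1.trans (hUK x hx))
      (Dvd.dvd.mul_left (Dvd.dvd.mul_left h2 x.2.2) (Polynomial.C a))
    rwa [add_sub_cancel_right] at h4
  have g0 := hU x0 hx0
  obtain ⟨hK0, hD0, hL0⟩ := hdvd x0 hx0
  have hl := g0.deg hF hi
  have hhl := natDegree_le_of_dvd hL0 g0.hL
  have hD0' := mem_monEq.1 g0.hD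
  have hhδ := natDegree_le_of_dvd hD0 hD0'.1.ne_zero
  rw [hD0'.2] at hhδ
  obtain ⟨K', hK'⟩ := hK0
  have hK'm : K'.Monic := by rw [hK'] at hK; exact hh.of_mul_monic_left hK
  have hKd : K.natDegree = h.natDegree + K'.natDegree := by rw [hK', hh.natDegree_mul hK'm]
  have c1 : (U.image (fun x => x.1)).card ≤ Fintype.card Fq ^ (δ - h.natDegree) := by
    apply card_le_of_diff _ _ hh _ hhδ
    intro D hD D' hD'
    simp only [Finset.mem_image] at hD hD'
    obtain ⟨x, hx, rfl⟩ := hD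
    obtain ⟨x', hx', rfl⟩ := hD'
    exact ⟨dvd_sub (hdvd x hx).2.1 (hdvd x' hx').2.1,
      degree_sub_lt_of_monic (hU x hx).hD (hU x' hx').hD⟩
  have c2 : (U.image (fun x => x.2.1)).card ≤
      Fintype.card Fq ^ ((i - F.natDegree) - h.natDegree) := by
    apply card_le_of_diff _ _ hh _ (by omega)
    intro D hD D' hD'
    simp only [Finset.mem_image] at hD hD'
    obtain ⟨x, hx, rfl⟩ := hD
    obtain ⟨x', hx', rfl⟩ := hD'
    exact ⟨dvd_sub (hdvd x hx).2.2 (hdvd x' hx').2.2, (hU x hx).diff hF (hU x' hx') hi (by omega)⟩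
  have c3 : ∀ p ∈ U.image (fun x => (x.1, x.2.1)),
      (U.filter (fun x => (x.1, x.2.1) = p)).card ≤ Fintype.card Fq ^ (β - K'.natDegree) := by
    rintro ⟨D, L⟩ _
    have e : (U.filter (fun x => (x.1, x.2.1) = (D, L))).card =
        ((U.filter (fun x => (x.1, x.2.1) = (D, L))).image (fun x => x.2.2)).card := by
      rw [Finset.card_image_of_injOn]
      rintro ⟨D1, L1, B1⟩ h1 ⟨D2, L2, B2⟩ h2 h3
      simp only [Finset.coe_filter, Set.mem_ofPred_eq, Prod.mk.injEq] at h1 h2 h3 ⊢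
      exact ⟨h1.2.1.trans h2.2.1.symm, h1.2.2.trans h2.2.2.symm, h3⟩
    rw [e]
    apply card_le_of_diff _ _ hK'm _ (by omega)
    intro B1 hB1 B2 hB2
    simp only [Finset.mem_image, Finset.mem_filter, Prod.mk.injEq] at hB1 hB2
    obtain ⟨⟨D1, L1, B1⟩, ⟨hx1, rfl, rfl⟩, rfl⟩ := hB1
    obtain ⟨⟨D2, L2, B2⟩, ⟨hx2, h3, h4⟩, rfl⟩ := hB2
    simp only at h3 h4
    subst h3 h4
    refine ⟨?_, degree_sub_lt_of_monic (hU _ hx1).hB (hU _ hx2).hB⟩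
    have hd := dvd_sub (hUK _ hx1) (hUK _ hx2)
    simp only at hd ⊢
    obtain ⟨-, ⟨D', hD'⟩, -⟩ := hdvd _ hx1
    simp only at hD'
    have hgc := hUh _ hx1
    simp only at hgc
    have hcop : IsCoprime K' D2 ∨ IsCoprime K' D' := by
      right
      have hg0 : h ≠ 0 := hh.ne_zero
      obtain ⟨u, v, huv⟩ : ∃ u v, h = K * u + D2 * v := by
        have hdg : EuclideanDomain.gcd K D2 ∣ h := by rw [← hgc]; exact dvd_normalize_iff.2 dvd_rfl
        obtain ⟨c, hc⟩ := hdg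
        refine ⟨EuclideanDomain.gcdA K D2 * c, EuclideanDomain.gcdB K D2 * c, ?_⟩
        rw [hc, EuclideanDomain.gcd_eq_gcd_ab K D2]; ring
      refine ⟨u, v, mul_left_cancel₀ hg0 ?_⟩
      rw [hK', hD'] at huv
      linear_combination -huv
    have hcop : IsCoprime K' D' := by
      rcases hcop with h1 | h1
      · rw [hD'] at h1; exact h1.of_mul_right_right
      · exact h1
    have hd2 : h * K' ∣ h * (Polynomial.C a * (D' * (B1 - B2))) := by
      rw [← hK']
      convert hd using 1
      rw [hD']; ring
    have hd3 := (mul_dvd_mul_iff_left hh.ne_zero).1 hd2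
    have hu : IsUnit (Polynomial.C a) := Polynomial.isUnit_C.2 (isUnit_iff_ne_zero.2 ha)
    rw [hu.dvd_mul_left] at hd3
    exact hcop.dvd_of_dvd_mul_left hd3
  have c4 : U.card ≤ Fintype.card Fq ^ (β - K'.natDegree) *
      (U.image (fun x => (x.1, x.2.1))).card := Finset.card_le_mul_card_image U _ c3
  have c5 : (U.image (fun x => (x.1, x.2.1))).card ≤
      (U.image (fun x => x.1)).card * (U.image (fun x => x.2.1)).card := by
    rw [← Finset.card_product]
    apply Finset.card_le_card
    intro p hp
    simp only [Finset.mem_image] at hp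
    obtain ⟨x, hx, rfl⟩ := hp
    exact Finset.mem_product.2 ⟨Finset.mem_image_of_mem _ hx,
      Finset.mem_image_of_mem (fun x : Fq[X] × Fq[X] × Fq[X] => x.2.1) hx⟩
  have c6 : U.card ≤ Fintype.card Fq ^ (β - K'.natDegree) *
      (Fintype.card Fq ^ (δ - h.natDegree) * Fintype.card Fq ^ ((i - F.natDegree) - h.natDegree)) :=
    c4.trans (Nat.mul_le_mul_left _ (c5.trans (Nat.mul_le_mul c1 c2)))
  rw [← pow_add, ← pow_add] at c6
  have c7 : (U.card : ℝ) ≤ (Fintype.card Fq : ℝ) ^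
      (β - K'.natDegree + (δ - h.natDegree + ((i - F.natDegree) - h.natDegree))) := by
    exact_mod_cast c6
  refine c7.trans (le_of_eq ?_)
  have e : β + δ + i = (β - K'.natDegree + (δ - h.natDegree + ((i - F.natDegree) - h.natDegree)))
      + F.natDegree + K.natDegree + h.natDegree := by omega
  rw [e, pow_add _ _ h.natDegree, pow_add _ _ K.natDegree, pow_add _ _ F.natDegree]
  field_simp

theorem caseY (F : Fq[X]) (hF : F.Monic) (a : Fq) (ha : a ≠ 0) (α β γ δ y : ℕ)
    (hi : β + δ ≤ α + γ) (hy : y ≤ β) (w : Fq[X] → ℝ) (hw : ∀ K, 0 ≤ w K)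
    (hmaj : ∀ N : Fq[X], N.Monic → N.natDegree = α + γ →
        ((mdiv N).card : ℝ) ≤ ∑ K ∈ (monLE Fq y).filter (fun K => K ∣ N), w K) :
    ((quad F a α β γ δ).card : ℝ) ≤
      (Fintype.card Fq : ℝ) ^ (α + β + γ + δ) / (Fintype.card Fq : ℝ) ^ F.natDegree
        * costW y w := by
  let g : Fq[X] × Fq[X] × Fq[X] × Fq[X] → Fq[X] × Fq[X] × Fq[X] := fun t =>
    (t.2.2.2, (t.1 * t.2.2.1 - Polynomial.C a * (t.2.1 * t.2.2.2)) / F, t.2.1)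
  let N : Fq[X] × Fq[X] × Fq[X] → Fq[X] := fun x => x.2.1 * F + Polynomial.C a * (x.2.2 * x.1)
  have hg : ∀ t ∈ quad F a α β γ δ, N (g t) = t.1 * t.2.2.1 := by
    rintro ⟨A, B, C, D⟩ h
    obtain ⟨-, -, ⟨c, hc⟩, -⟩ := mem_quad.1 h
    simp only [N, g]
    rw [hc, mul_div_cancel_left₀ _ hF.ne_zero]
    linear_combination -hc
  have hgood : ∀ t ∈ quad F a α β γ δ, GoodT F a (α + γ) β δ (g t) := by
    rintro ⟨A, B, C, D⟩ h
    have hN := hg _ h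
    obtain ⟨⟨h1, h2, h3, h4⟩, h5, h6, h7⟩ := mem_quad.1 h
    refine ⟨h4, h2, h5.of_mul_left_right, ?_, ?_⟩
    · intro h0
      simp only [N] at hN
      rw [h0, zero_mul, zero_add] at hN
      simp only [g] at hN
      have hl := congrArg Polynomial.leadingCoeff hN
      rw [leadingCoeff_mul, leadingCoeff_C, (mem_monEq.1 (mul_mem_monEq h2 h4)).1.leadingCoeff,
        (mem_monEq.1 (mul_mem_monEq h1 h3)).1.leadingCoeff, mul_one] at hl
      rw [hl, Polynomial.C_1, one_mul] at hN
      exact h7 hN.symm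
    · change N (g _) ∈ _
      rw [hN]; exact mul_mem_monEq h1 h3
  let U := (quad F a α β γ δ).image g
  have hU : ∀ x ∈ U, GoodT F a (α + γ) β δ x := by
    intro x hx
    obtain ⟨t, ht, rfl⟩ := Finset.mem_image.1 hx
    exact hgood t ht
  have h1 : (quad F a α β γ δ).card ≤ (U.sigma (fun x => mdiv (N x))).card := by
    refine Finset.card_le_card_of_injOn (fun t => ⟨g t, t.1⟩) ?_ ?_
    · rintro ⟨A, B, C, D⟩ h
      have h := Finset.mem_coe.1 h
      simp only [Finset.mem_coe, Finset.mem_sigma]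
      refine ⟨Finset.mem_image_of_mem _ h, ?_⟩
      rw [hg _ h]
      obtain ⟨⟨h1, h2, h3, h4⟩, h5, h6, h7⟩ := mem_quad.1 h
      exact (mem_mdiv (mem_monEq.1 (mul_mem_monEq h1 h3)).1.ne_zero).2
        ⟨(mem_monEq.1 h1).1, dvd_mul_right _ _⟩
    · rintro ⟨A, B, C, D⟩ h ⟨A', B', C', D'⟩ h2 h'
      have h := Finset.mem_coe.1 h
      have h2 := Finset.mem_coe.1 h2
      have hA := (mem_monEq.1 (mem_quad.1 h).1.1).1.ne_zero
      simp only [Sigma.mk.injEq, heq_eq_eq] at h'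
      obtain ⟨h3, rfl⟩ := h'
      have h4 : A * C = A * C' := by
        have e1 := hg _ h
        have e2 := hg _ h2
        rw [h3] at e1
        exact e1.symm.trans e2
      simp only [g, Prod.mk.injEq] at h3
      obtain ⟨rfl, -, rfl⟩ := h3
      rw [mul_left_cancel₀ hA h4]
  have h2 : ((U.sigma (fun x => mdiv (N x))).card : ℝ) = ∑ x ∈ U, ((mdiv (N x)).card : ℝ) := by
    rw [Finset.card_sigma]; push_cast; rfl
  refine le_trans (by exact_mod_cast h1) (h2.le.trans ?_)
  apply sum_majorant_le U N y w hw
  · intro x hx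
    have := mem_monEq.1 (hU x hx).hN
    exact hmaj _ this.1 this.2
  · intro K hK
    rw [mem_monLE] at hK
    have hm : ∀ x ∈ U.filter (fun x => K ∣ N x),
        normalize (EuclideanDomain.gcd K x.1) ∈ mdiv K := by
      intro x hx
      rw [mem_mdiv hK.1.ne_zero]
      refine ⟨Polynomial.monic_normalize ?_, ?_⟩
      · intro h0
        exact hK.1.ne_zero (EuclideanDomain.gcd_eq_zero_iff.1 h0).1
      · rw [normalize_dvd_iff]; exact EuclideanDomain.gcd_dvd_left _ _
    rw [Finset.card_eq_sum_card_fiberwise hm, Finset.mul_sum, Finset.mul_sum]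
    push_cast
    apply Finset.sum_le_sum
    intro h hh
    rw [mem_mdiv hK.1.ne_zero] at hh
    have := countY F hF a ha (α + γ) β δ hi
      ((U.filter (fun x => K ∣ N x)).filter (fun x => normalize (EuclideanDomain.gcd K x.1) = h))
      (fun x hx => hU x (Finset.mem_filter.1 (Finset.mem_filter.1 hx).1).1)
      K h hK.1 (by omega) hh.1
      (fun x hx => (Finset.mem_filter.1 (Finset.mem_filter.1 hx).1).2)
      (fun x hx => (Finset.mem_filter.1 hx).2)
    rwa [show β + δ + (α + γ) = α + β + γ + δ by ring] at this

end FF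

section FF

theorem tuple_bound : ∃ C : ℝ, 0 < C ∧ ∀ (Fq : Type) [Field Fq] [Fintype Fq] (F : Fq[X]),
    F.Monic → ∀ a : Fq, a ≠ 0 → ∀ α β γ δ : ℕ, 19 * F.natDegree < 10 * (α + β + γ + δ) →
    ((quad F a α β γ δ).card : ℝ) ≤
      C * ((α + β + γ + δ : ℕ) + 1) *
      ((Fintype.card Fq : ℝ) ^ (α + β + γ + δ) / (Fintype.card Fq : ℝ) ^ F.natDegree) := by
  obtain ⟨C, hC, hmaj⟩ := majorant
  refine ⟨C, hC, ?_⟩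
  intro Fq _ _ F hF
  have hq2 : (2:ℝ) ≤ (Fintype.card Fq : ℝ) := one_lt_q
  have hq0 : 0 < (Fintype.card Fq : ℝ) := by linarith
  -- main case
  have main : ∀ a : Fq, a ≠ 0 → ∀ α β γ δ : ℕ, 19 * F.natDegree < 10 * (α + β + γ + δ) →
      β + δ ≤ α + γ → δ ≤ β →
      ((quad F a α β γ δ).card : ℝ) ≤ C * ((α + β + γ + δ : ℕ) + 1) *
      ((Fintype.card Fq : ℝ) ^ (α + β + γ + δ) / (Fintype.card Fq : ℝ) ^ F.natDegree) := by
    intro a ha α β γ δ h1 h2 h3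
    have key : ∃ (y : ℕ) (w : Fq[X] → ℝ), y ≤ α + β + γ + δ ∧ costW y w ≤ C * (y + 1) ∧
        ((quad F a α β γ δ).card : ℝ) ≤
        (Fintype.card Fq : ℝ) ^ (α + β + γ + δ) / (Fintype.card Fq : ℝ) ^ F.natDegree
        * costW y w := by
      by_cases hX : 5 * F.natDegree ≤ 4 * (α + γ)
      · obtain ⟨w, hw, hm, hc⟩ := hmaj Fq (α + γ) (α + γ - F.natDegree) (by omega)
        exact ⟨_, w, by omega, hc, caseX F hF a α β γ δ _ (by omega) w hw hm⟩
      · obtain ⟨w, hw, hm, hc⟩ := hmaj Fq (α + γ) β (by omega)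
        exact ⟨_, w, by omega, hc, caseY F hF a ha α β γ δ _ h2 le_rfl w hw hm⟩
    obtain ⟨y, w, hy, hc, hb⟩ := key
    refine hb.trans ?_
    rw [mul_comm]
    apply mul_le_mul_of_nonneg_right _ (by positivity)
    refine hc.trans ?_
    have : (y:ℝ) ≤ ((α + β + γ + δ : ℕ) : ℝ) := by exact_mod_cast hy
    apply mul_le_mul_of_nonneg_left _ hC.le
    linarith
  have main2 : ∀ a : Fq, a ≠ 0 → ∀ α β γ δ : ℕ, 19 * F.natDegree < 10 * (α + β + γ + δ) →
      β + δ ≤ α + γ →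
      ((quad F a α β γ δ).card : ℝ) ≤ C * ((α + β + γ + δ : ℕ) + 1) *
      ((Fintype.card Fq : ℝ) ^ (α + β + γ + δ) / (Fintype.card Fq : ℝ) ^ F.natDegree) := by
    intro a ha α β γ δ h1 h2
    by_cases h3 : δ ≤ β
    · exact main a ha α β γ δ h1 h2 h3
    · have h4 := main a ha γ δ α β (by omega) (by omega) (by omega)
      rw [show γ + δ + α + β = α + β + γ + δ by ring] at h4
      refine le_trans ?_ h4
      exact_mod_cast quad_swap2 F a α β γ δ
  intro a ha α β γ δ h1
  by_cases h3 : β + δ ≤ α + γ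
  · exact main2 a ha α β γ δ h1 h3
  · have h4 := main2 a⁻¹ (inv_ne_zero ha) β α δ γ (by omega) (by omega)
    rw [show β + α + δ + γ = α + β + γ + δ by ring] at h4
    refine le_trans ?_ h4
    exact_mod_cast quad_swap1 F a ha α β γ δ

theorem ffPhi_bounds {Fq : Type} [Field Fq] [Fintype Fq] (F : Fq[X]) (hF : F.Monic) :
    1 ≤ ffPhi F ∧ ffPhi F ≤ Fintype.card Fq ^ F.natDegree := by
  unfold ffPhi
  split_ifs with h
  · rw [h]; simp
  · have hd : F.degree = (F.natDegree : WithBot ℕ) := degree_eq_natDegree hF.ne_zero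
    have hfin : {A : Fq[X] | A.degree < F.degree ∧ IsCoprime A F}.Finite := by
      refine (ff_finite_degreeLT (Fq := Fq) F.natDegree).subset ?_
      intro A hA
      have := hA.1
      rw [hd] at this
      exact this
    have e : Nat.card {A : Fq[X] // A.degree < F.degree ∧ IsCoprime A F} = hfin.toFinset.card := by
      rw [← Set.ncard_eq_toFinset_card _ hfin, ← Nat.card_coe_set_eq]; rfl
    rw [e]
    constructor
    · rw [Nat.one_le_iff_ne_zero, ← Nat.pos_iff_ne_zero, Finset.card_pos]
      refine ⟨1, ?_⟩
      rw [Set.Finite.mem_toFinset]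
      refine ⟨?_, isCoprime_one_left⟩
      rw [hd, degree_one]
      exact_mod_cast Nat.pos_of_ne_zero h
    · rw [← card_polyLT]
      apply Finset.card_le_card
      intro A hA
      rw [Set.Finite.mem_toFinset] at hA
      rw [mem_polyLT, ← hd]
      exact hA.1

end FF

/-- For monic `F`, `a ∈ F_q*`, and `z₁ + z₂ > (19/10)·deg F`, the number of monic
quadruples `(A,B,C,D)` with `deg AB = z₁`, `deg CD = z₂`, `(ABCD,F)=1`,
`AC ≡ a·BD (mod F)` and `AC ≠ BD` is `O(q^{z₁+z₂}(z₁+z₂)³/φ(F))`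
with an absolute implied constant. -/
theorem offdiagonal_count_bound :
    ∃ Cst : ℝ, 0 < Cst ∧ ∀ (Fq : Type) [Field Fq] [Fintype Fq] (F : Polynomial Fq),
      F.Monic → ∀ a : Fq, a ≠ 0 → ∀ z₁ z₂ : ℕ, 19 * F.natDegree < 10 * (z₁ + z₂) →
      (Nat.card {t : Polynomial Fq × Polynomial Fq × Polynomial Fq × Polynomial Fq //
          t.1.Monic ∧ t.2.1.Monic ∧ t.2.2.1.Monic ∧ t.2.2.2.Monic ∧
          (t.1 * t.2.1).natDegree = z₁ ∧ (t.2.2.1 * t.2.2.2).natDegree = z₂ ∧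
          IsCoprime (t.1 * t.2.1 * t.2.2.1 * t.2.2.2) F ∧
          F ∣ (t.1 * t.2.2.1 - Polynomial.C a * (t.2.1 * t.2.2.2)) ∧
          t.1 * t.2.2.1 ≠ t.2.1 * t.2.2.2} : ℝ)
        ≤ Cst * (Fintype.card Fq : ℝ) ^ (z₁ + z₂) * ((z₁ + z₂ : ℕ) : ℝ) ^ 3 / ffPhi F := by
  obtain ⟨C, hC, htup⟩ := tuple_bound
  refine ⟨8 * C, by positivity, ?_⟩
  intro Fq _ _ F hF a ha z₁ z₂ hz
  have hq2 : (2:ℝ) ≤ (Fintype.card Fq : ℝ) := one_lt_q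
  set q : ℝ := (Fintype.card Fq : ℝ) with hq
  have hq0 : 0 < q := by linarith
  let I := Finset.range (z₁ + 1) ×ˢ Finset.range (z₂ + 1)
  let V := I.biUnion (fun p => quad F a p.1 (z₁ - p.1) p.2 (z₂ - p.2))
  have h1 : Nat.card {t : Polynomial Fq × Polynomial Fq × Polynomial Fq × Polynomial Fq //
          t.1.Monic ∧ t.2.1.Monic ∧ t.2.2.1.Monic ∧ t.2.2.2.Monic ∧
          (t.1 * t.2.1).natDegree = z₁ ∧ (t.2.2.1 * t.2.2.2).natDegree = z₂ ∧
          IsCoprime (t.1 * t.2.1 * t.2.2.1 * t.2.2.2) F ∧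
          F ∣ (t.1 * t.2.2.1 - Polynomial.C a * (t.2.1 * t.2.2.2)) ∧
          t.1 * t.2.2.1 ≠ t.2.1 * t.2.2.2} ≤ V.card := by
    have e : Nat.card V = V.card := by simp
    rw [← e]
    apply Nat.card_le_card_of_injective (β := V) (fun t => ⟨t.1, ?_⟩)
    · intro t t' h
      apply Subtype.ext
      exact congrArg (fun v : V => v.1) h
    · obtain ⟨⟨A, B, C, D⟩, hA, hB, hC, hD, h1, h2, h3, h4, h5⟩ := t
      simp only at hA hB hC hD h1 h2 h3 h4 h5
      rw [hA.natDegree_mul hB] at h1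
      rw [hC.natDegree_mul hD] at h2
      simp only [V, I, Finset.mem_biUnion, Finset.mem_product, Finset.mem_range]
      refine ⟨(A.natDegree, C.natDegree), ⟨by simp only; omega, by simp only; omega⟩, ?_⟩
      rw [mem_quad]
      exact ⟨⟨mem_monEq.2 ⟨hA, rfl⟩, mem_monEq.2 ⟨hB, by simp only; omega⟩,
        mem_monEq.2 ⟨hC, rfl⟩, mem_monEq.2 ⟨hD, by simp only; omega⟩⟩, h3, h4, h5⟩
  have h2 : (V.card : ℝ) ≤ ∑ p ∈ I, C * ((z₁ + z₂ : ℕ) + 1) * (q ^ (z₁ + z₂) / q ^ F.natDegree) := by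
    have h3 : (V.card : ℝ) ≤ ∑ p ∈ I, ((quad F a p.1 (z₁ - p.1) p.2 (z₂ - p.2)).card : ℝ) := by
      exact_mod_cast Finset.card_biUnion_le
    refine h3.trans (Finset.sum_le_sum ?_)
    intro p hp
    simp only [I, Finset.mem_product, Finset.mem_range] at hp
    have e : p.1 + (z₁ - p.1) + p.2 + (z₂ - p.2) = z₁ + z₂ := by omega
    have h4 := htup Fq F hF a ha p.1 (z₁ - p.1) p.2 (z₂ - p.2) (by rw [e]; exact hz)
    rwa [e] at h4
  have h3 : (I.card : ℝ) = ((z₁:ℝ) + 1) * (z₂ + 1) := by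
    simp only [I, Finset.card_product, Finset.card_range]; push_cast; rfl
  rw [Finset.sum_const, nsmul_eq_mul, h3] at h2
  obtain ⟨p1, p2⟩ := ffPhi_bounds F hF
  have p1' : (1:ℝ) ≤ (ffPhi F : ℝ) := by exact_mod_cast p1
  have p2' : (ffPhi F : ℝ) ≤ q ^ F.natDegree := by rw [hq]; exact_mod_cast p2
  have hn1 : (1:ℝ) ≤ ((z₁ + z₂ : ℕ) : ℝ) := by
    have : 1 ≤ z₁ + z₂ := by omega
    exact_mod_cast this
  have hz1 : (z₁:ℝ) ≤ ((z₁ + z₂ : ℕ) : ℝ) := by exact_mod_cast Nat.le_add_right _ _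
  have hz2 : (z₂:ℝ) ≤ ((z₁ + z₂ : ℕ) : ℝ) := by exact_mod_cast Nat.le_add_left _ _
  set n : ℝ := ((z₁ + z₂ : ℕ) : ℝ) with hn
  have h5 : q ^ (z₁ + z₂) / q ^ F.natDegree ≤ q ^ (z₁ + z₂) / ffPhi F := by
    apply div_le_div_of_nonneg_left (by positivity) (by linarith) p2'
  calc _ ≤ (V.card : ℝ) := by exact_mod_cast h1
    _ ≤ _ := h2
    _ ≤ ((2 * n) * (2 * n)) * (C * (2 * n) * (q ^ (z₁ + z₂) / ffPhi F)) := by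
        have e1 : (z₁:ℝ) + 1 ≤ 2 * n := by linarith
        have e2 : (z₂:ℝ) + 1 ≤ 2 * n := by linarith
        have e3 : n + 1 ≤ 2 * n := by linarith
        have e0 : 0 ≤ n := by linarith
        gcongr
    _ = _ := by ring
end
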